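/- arXiv:2506.02424 — 2 statements merged into one kernel-verified Lean document; each statement's English description precedes it below -/
import Mathlib

section
/- Let Ω ⊂ [−1,1]² be closed and suppose f : Ω → ℂ admits an infinitely differentiable extension to an open neighborhood of Ω. Then for each positive integer m there exists a constant C(m,f), depending on m and f but not on c, such that for each real number c > 1 there exists a Schwartz function f_b ∈ 𝒮(ℝ²) with: (1) the Fourier transform f̂_b is supported in [−c−4, c+4]²; (2) sup_{Ω} |f_b − f| ≤ C(m,f)/c^{2m}; (3) sup_{ℝ²} |f_b| ≤ 2 · sup_{Ω} |f| + C(m,f)/c^{2m}; and (4) sup_{ℝ²} |D^α f̂_b| ≤ 10 · sup_{Ω} |f| for all multi-indices α with |α| ≤ 2. -/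
open MeasureTheory Real

noncomputable section

/-- The partial derivative `∂/∂x` of a function on `ℝ²`. -/
def pd1 (f : ℝ × ℝ → ℂ) : ℝ × ℝ → ℂ := fun z => fderiv ℝ f z (1, 0)

/-- The partial derivative `∂/∂y` of a function on `ℝ²`. -/
def pd2 (f : ℝ × ℝ → ℂ) : ℝ × ℝ → ℂ := fun z => fderiv ℝ f z (0, 1)

/-- The multi-index partial derivative `D^α = ∂_x^{α₁} ∂_y^{α₂}` on `ℝ²`. -/
def mderiv2 (α : ℕ × ℕ) (f : ℝ × ℝ → ℂ) : ℝ × ℝ → ℂ := pd1^[α.1] (pd2^[α.2] f)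

/-- The Fourier transform on `ℝ²` with the paper's normalization:
`f̂(ξ) = (1/(4π²)) ∫∫ f(x) e^{-i ξ·x} dx`. -/
def paperFT (f : ℝ × ℝ → ℂ) (ξ : ℝ × ℝ) : ℂ :=
  (1 / (4 * (π : ℂ) ^ 2)) *
    ∫ x : ℝ × ℝ, f x * Complex.exp (-Complex.I * ((ξ.1 * x.1 + ξ.2 * x.2 : ℝ) : ℂ))

/-- The sup of `‖f‖` over a subset `S` of `ℝ²`. -/
def supOn (f : ℝ × ℝ → ℂ) (S : Set (ℝ × ℝ)) : ℝ := ⨆ z : S, ‖f (z : ℝ × ℝ)‖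

/-!
Multiply `f` by a smooth bump function to extend it to a compactly supported smooth `g` with
`|g| ≤ 2 sup_Ω |f|`, supported in a square slightly larger than `[-1, 1]²`, and obtain `f_b` by
multiplying `ĝ` by a smooth cutoff `φ(ξ / c)`. This changes only the frequencies above `c / 2`, so
the rapid decay of `ĝ` gives `|f_b - g| = O(c^{-n})` for every `n`.

The square has half-width `5 / 4`, so differentiating under the integral bounds all derivatives of
`ĝ` of order at most two by `(5 / 2) sup_Ω |f|`. The derivatives of `φ(ξ / c)` are at most one for
large `c`, so the Leibniz rule costs a factor `2² = 4` and the bound `10 sup_Ω |f|` results. For the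
remaining bounded range of `c`, the function `f_b = 0` will do.
-/

open Set Filter Metric Function SchwartzMap
open scoped FourierTransform ContDiff Topology Manifold

section Extension

variable {E F : Type*} [NormedAddCommGroup E] [NormedSpace ℝ E] [FiniteDimensional ℝ E]
  [NormedAddCommGroup F] [NormedSpace ℝ F]

lemma exists_contDiff_eqOn_norm_le {n : ℕ∞} {K W : Set E} {f : E → F} (hK : IsClosed K)
    (hW : IsOpen W) (hKW : K ⊆ W) (hf : ContDiffOn ℝ n f W) :
    ∃ g : E → F, ContDiff ℝ n g ∧ EqOn g f K ∧ support g ⊆ W ∧ ∀ x, ‖g x‖ ≤ ‖f x‖ := by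
  obtain ⟨χ, hχ0, hχ1, hχI⟩ := exists_contMDiffMap_zero_one_nhds_of_isClosed (n := n) 𝓘(ℝ, E)
    hW.isClosed_compl hK (disjoint_compl_left_iff_subset.2 hKW)
  have hχW : tsupport χ ⊆ W := fun x hx => by
    by_contra hxW
    exact notMem_tsupport_iff_eventuallyEq.2 (hχ0.filter_mono (nhds_le_nhdsSet hxW)) hx
  refine ⟨fun x => χ x • f x, ?_, fun x hx => ?_, ?_, fun x => ?_⟩
  · refine (contMDiff_of_tsupport fun x hx => ContDiffAt.contMDiffAt ?_).contDiff
    exact χ.contMDiff.contDiff.contDiffAt.smul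
      (hf.contDiffAt (hW.mem_nhds (hχW (tsupport_smul_subset_left χ f hx))))
  · simp only [hχ1.self_of_nhdsSet x hx, one_smul]
  · exact (support_smul_subset_left χ f).trans ((subset_tsupport χ).trans hχW)
  · rw [norm_smul, Real.norm_of_nonneg (hχI x).1]
    exact mul_le_of_le_one_left (norm_nonneg _) (hχI x).2

end Extension

section IteratedFDeriv

variable {E F : Type*} [NormedAddCommGroup E] [NormedSpace ℝ E]
  [NormedAddCommGroup F] [NormedSpace ℝ F]

lemma norm_iteratedFDeriv_smul_le_two_pow_mul {f : E → ℝ} {g : E → F} {n : ℕ}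
    (hf : ContDiff ℝ n f) (hg : ContDiff ℝ n g) {a b : ℝ} {x : E}
    (ha : ∀ i ≤ n, ‖iteratedFDeriv ℝ i f x‖ ≤ a) (hb : ∀ i ≤ n, ‖iteratedFDeriv ℝ i g x‖ ≤ b) :
    ‖iteratedFDeriv ℝ n (fun y => f y • g y) x‖ ≤ 2 ^ n * (a * b) := by
  have ha0 : 0 ≤ a := (norm_nonneg _).trans (ha 0 n.zero_le)
  calc ‖iteratedFDeriv ℝ n (fun y => f y • g y) x‖
    _ ≤ ∑ i ∈ Finset.range (n + 1), (n.choose i : ℝ) * ‖iteratedFDeriv ℝ i f x‖ *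
          ‖iteratedFDeriv ℝ (n - i) g x‖ := norm_iteratedFDeriv_smul_le hf hg x le_rfl
    _ ≤ ∑ i ∈ Finset.range (n + 1), (n.choose i : ℝ) * a * b := by
      gcongr with i hi
      · exact ha i (Finset.mem_range_succ_iff.1 hi)
      · exact hb _ (n.sub_le i)
    _ = 2 ^ n * (a * b) := by
      rw [← Finset.sum_mul, ← Finset.sum_mul, ← Nat.cast_sum, Nat.sum_range_choose]
      push_cast
      ring

lemma eventually_norm_iteratedFDeriv_comp_inv_smul_le {f : E → F} {n : ℕ} (hf : ContDiff ℝ n f)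
    (hn : n ≠ 0) {B : ℝ} (hB : ∀ x, ‖iteratedFDeriv ℝ n f x‖ ≤ B) {ε : ℝ} (hε : 0 < ε) :
    ∀ᶠ c : ℝ in atTop, ∀ x, ‖iteratedFDeriv ℝ n (fun y => f (c⁻¹ • y)) x‖ ≤ ε := by
  have hlim : Tendsto (fun c : ℝ => ‖c⁻¹‖ ^ n * B) atTop (𝓝 0) := by
    simpa [hn] using ((tendsto_inv_atTop_zero (𝕜 := ℝ)).norm.pow n).mul_const B
  filter_upwards [hlim.eventually_le_const hε] with c hc x
  rw [iteratedFDeriv_comp_const_smul _ hf, norm_smul, norm_pow]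
  exact (mul_le_mul_of_nonneg_left (hB _) (by positivity)).trans hc

lemma contDiff_iterate_fderiv_apply {f : E → F} (hf : ContDiff ℝ ∞ f) (v : E) (k : ℕ) :
    ContDiff ℝ ∞ ((fun (g : E → F) y => fderiv ℝ g y v)^[k] f) := by
  induction k generalizing f with
  | zero => exact hf
  | succ _ ih => exact ih ((hf.fderiv_right le_rfl).clm_apply contDiff_const)

lemma norm_iteratedFDeriv_iterate_fderiv_apply_le {f : E → F} (hf : ContDiff ℝ ∞ f) {v : E}
    (hv : ‖v‖ ≤ 1) (n k : ℕ) (x : E) :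
    ‖iteratedFDeriv ℝ n ((fun (g : E → F) y => fderiv ℝ g y v)^[k] f) x‖ ≤
      ‖iteratedFDeriv ℝ (n + k) f x‖ := by
  induction k generalizing n with
  | zero => rfl
  | succ k ih =>
    rw [iterate_succ_apply']
    set h := (fun (g : E → F) y => fderiv ℝ g y v)^[k] f
    have hh : ContDiff ℝ ∞ (fderiv ℝ h) :=
      (contDiff_iterate_fderiv_apply hf v k).fderiv_right le_rfl
    calc ‖iteratedFDeriv ℝ n (fun y => fderiv ℝ h y v) x‖
      _ ≤ ‖v‖ * ‖iteratedFDeriv ℝ n (fderiv ℝ h) x‖ :=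
        norm_iteratedFDeriv_clm_apply_const hh.contDiffAt (mod_cast le_top)
      _ ≤ ‖iteratedFDeriv ℝ (n + 1) h x‖ := by
        rw [norm_iteratedFDeriv_fderiv]
        exact mul_le_of_le_one_left (norm_nonneg _) hv
      _ ≤ ‖iteratedFDeriv ℝ (n + (k + 1)) f x‖ := by
        rw [← add_assoc, add_right_comm]
        exact ih (n + 1)

lemma norm_mderiv2_le {f : ℝ × ℝ → ℂ} (hf : ContDiff ℝ ∞ f) (α : ℕ × ℕ) (z : ℝ × ℝ) :
    ‖mderiv2 α f z‖ ≤ ‖iteratedFDeriv ℝ (α.1 + α.2) f z‖ := by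
  have hf2 : ContDiff ℝ ∞ (pd2^[α.2] f) := contDiff_iterate_fderiv_apply hf (0, 1) α.2
  calc ‖mderiv2 α f z‖
    _ = ‖iteratedFDeriv ℝ 0 (pd1^[α.1] (pd2^[α.2] f)) z‖ := norm_iteratedFDeriv_zero.symm
    _ ≤ ‖iteratedFDeriv ℝ (0 + α.1) (pd2^[α.2] f) z‖ :=
      norm_iteratedFDeriv_iterate_fderiv_apply_le hf2 (v := (1, 0)) (by simp) 0 α.1 z
    _ ≤ ‖iteratedFDeriv ℝ (α.1 + α.2) f z‖ := by
      rw [zero_add]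
      exact norm_iteratedFDeriv_iterate_fderiv_apply_le hf (v := (0, 1)) (by simp) α.1 α.2 z

end IteratedFDeriv

section Cutoff

variable {E : Type*} [NormedAddCommGroup E] [NormedSpace ℝ E] [HasContDiffBump E]

/-- A smooth cutoff to the frequencies below `c`: it is `1` on the ball of radius `c / 2`
and vanishes off the ball of radius `c`. All cutoffs are dilations of a single bump function, so
that their derivatives tend to zero as `c` grows. -/
def freqCutoff (c : ℝ) (ξ : E) : ℝ :=
  (⟨1 / 2, 1, by norm_num, by norm_num⟩ : ContDiffBump (0 : E)) (c⁻¹ • ξ)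

lemma contDiff_freqCutoff {n : ℕ∞} (c : ℝ) : ContDiff ℝ n (freqCutoff c : E → ℝ) :=
  (ContDiffBump.contDiff _).comp (contDiff_const_smul _)

lemma norm_freqCutoff_le_one (c : ℝ) (ξ : E) : ‖freqCutoff c ξ‖ ≤ 1 :=
  (Real.norm_of_nonneg (ContDiffBump.nonneg _)).trans_le (ContDiffBump.le_one _)

lemma freqCutoff_eq_zero {c : ℝ} (hc : 0 < c) {ξ : E} (hξ : c ≤ ‖ξ‖) : freqCutoff c ξ = 0 := by
  refine ContDiffBump.zero_of_le_dist _ ?_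
  rw [dist_zero_right, norm_smul, norm_inv, Real.norm_of_nonneg hc.le, inv_mul_eq_div]
  exact (one_le_div hc).2 hξ

lemma norm_freqCutoff_sub_one_le {c : ℝ} (hc : 0 < c) (ξ : E) (n : ℕ) :
    ‖freqCutoff c ξ - 1‖ ≤ (2 * ‖ξ‖ / c) ^ n := by
  have hnorm : ‖c⁻¹ • ξ‖ = ‖ξ‖ / c := by
    rw [norm_smul, norm_inv, Real.norm_of_nonneg hc.le, inv_mul_eq_div]
  rcases le_or_gt ‖c⁻¹ • ξ‖ (1 / 2) with hlow | hhigh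
  · have hone : freqCutoff c ξ = 1 :=
      ContDiffBump.one_of_mem_closedBall _ (mem_closedBall_zero_iff.2 hlow)
    rw [hone, sub_self, norm_zero]
    positivity
  · have hdist : ‖freqCutoff c ξ - 1‖ ≤ 1 := by
      rw [Real.norm_eq_abs, abs_sub_le_iff]
      have hnonneg : 0 ≤ freqCutoff c ξ := ContDiffBump.nonneg _
      have hle : freqCutoff c ξ ≤ 1 := ContDiffBump.le_one _
      constructor <;> linarith
    refine hdist.trans (one_le_pow₀ ?_)
    rw [mul_div_assoc]
    linarith

variable [FiniteDimensional ℝ E]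

lemma hasCompactSupport_freqCutoff {c : ℝ} (hc : 0 < c) :
    HasCompactSupport (freqCutoff c : E → ℝ) :=
  (ContDiffBump.hasCompactSupport _).comp_homeomorph
    (Homeomorph.smulOfNeZero _ (inv_ne_zero hc.ne'))

lemma hasTemperateGrowth_freqCutoff {c : ℝ} (hc : 0 < c) :
    HasTemperateGrowth (freqCutoff c : E → ℝ) :=
  (hasCompactSupport_freqCutoff hc).hasTemperateGrowth (contDiff_freqCutoff c)

lemma eventually_norm_iteratedFDeriv_freqCutoff_le_one (n : ℕ) :
    ∀ᶠ c : ℝ in atTop, ∀ ξ : E, ‖iteratedFDeriv ℝ n (freqCutoff c) ξ‖ ≤ 1 := by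
  rcases eq_or_ne n 0 with rfl | hn
  · simp only [norm_iteratedFDeriv_zero, norm_freqCutoff_le_one, implies_true, eventually_true]
  · let φ : ContDiffBump (0 : E) := ⟨1 / 2, 1, by norm_num, by norm_num⟩
    obtain ⟨B, hB⟩ := (φ.hasCompactSupport.iteratedFDeriv n).exists_bound_of_continuous
      (φ.contDiff (n := n)).continuous_iteratedFDeriv'
    exact eventually_norm_iteratedFDeriv_comp_inv_smul_le φ.contDiff hn hB one_pos

end Cutoff

section PaperFT

/-- The pairing `(x, y) ↦ x·y / 2π` of the plane with itself. It turns Mathlib's character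
`t ↦ e^{2πit}` into the kernel `e^{i x·y}` of `paperFT`. -/
def planePairing : (ℝ × ℝ) →L[ℝ] (ℝ × ℝ) →L[ℝ] ℝ :=
  (2 * π)⁻¹ • (((ContinuousLinearMap.mul ℝ ℝ).bilinearComp
      (ContinuousLinearMap.fst ℝ ℝ ℝ) (ContinuousLinearMap.fst ℝ ℝ ℝ)) +
    ((ContinuousLinearMap.mul ℝ ℝ).bilinearComp
      (ContinuousLinearMap.snd ℝ ℝ ℝ) (ContinuousLinearMap.snd ℝ ℝ ℝ)))

lemma planePairing_apply (x y : ℝ × ℝ) :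
    planePairing x y = (2 * π)⁻¹ * (x.1 * y.1 + x.2 * y.2) := by
  simp [planePairing, mul_add]

lemma two_pi_mul_norm_planePairing_le : 2 * π * ‖planePairing‖ ≤ 2 := by
  have hbound : ‖planePairing‖ ≤ π⁻¹ := by
    refine ContinuousLinearMap.opNorm_le_bound₂ _ (by positivity) fun x y => ?_
    rw [planePairing_apply, norm_mul, Real.norm_of_nonneg (by positivity : 0 ≤ (2 * π)⁻¹)]
    calc (2 * π)⁻¹ * ‖x.1 * y.1 + x.2 * y.2‖
      _ ≤ (2 * π)⁻¹ * (‖x‖ * ‖y‖ + ‖x‖ * ‖y‖) := by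
        gcongr
        refine norm_add_le_of_le ?_ ?_ <;> rw [norm_mul] <;> gcongr
        exacts [norm_fst_le x, norm_fst_le y, norm_snd_le x, norm_snd_le y]
      _ = π⁻¹ * ‖x‖ * ‖y‖ := by field
  calc 2 * π * ‖planePairing‖ ≤ 2 * π * π⁻¹ := by gcongr
    _ = 2 := mul_inv_cancel_right₀ Real.pi_ne_zero 2

lemma paperFT_eq_smul_fourierIntegral (f : ℝ × ℝ → ℂ) :
    paperFT f = (4 * π ^ 2)⁻¹ •
      VectorFourier.fourierIntegral 𝐞 volume planePairing.toLinearMap₁₂ f := by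
  ext ξ
  have hkernel (x : ℝ × ℝ) :
      f x * Complex.exp (-Complex.I * ((ξ.1 * x.1 + ξ.2 * x.2 : ℝ) : ℂ)) =
        𝐞 (-planePairing x ξ) • f x := by
    have hpi : (π : ℂ) ≠ 0 := mod_cast Real.pi_ne_zero
    rw [planePairing_apply, Circle.smul_def, Real.fourierChar_apply, smul_eq_mul, mul_comm]
    congr 2
    push_cast
    field
  simp only [paperFT, hkernel, Pi.smul_apply, VectorFourier.fourierIntegral, Complex.real_smul,
    one_div,
    ContinuousLinearMap.toLinearMap₁₂_apply_apply_apply, Complex.ofReal_inv, Complex.ofReal_mul,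
    Complex.ofReal_pow, Complex.ofReal_ofNat]

variable {f : ℝ × ℝ → ℂ}

lemma contDiff_paperFT {n : ℕ∞}
    (hf : ∀ k : ℕ, k ≤ n → Integrable fun x => ‖x‖ ^ k * ‖f x‖) : ContDiff ℝ n (paperFT f) := by
  rw [paperFT_eq_smul_fourierIntegral]
  exact (VectorFourier.contDiff_fourierIntegral planePairing hf).const_smul (4 * π ^ 2)⁻¹

lemma norm_iteratedFDeriv_paperFT_le {n : ℕ}
    (hf : ∀ k ≤ n, Integrable fun x => ‖x‖ ^ k * ‖f x‖) (hfm : AEStronglyMeasurable f)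
    (ξ : ℝ × ℝ) :
    ‖iteratedFDeriv ℝ n (paperFT f) ξ‖ ≤
      (4 * π ^ 2)⁻¹ * (2 ^ n * ∫ x, ‖x‖ ^ n * ‖f x‖) := by
  have hf' : ∀ k : ℕ, k ≤ (n : ℕ∞) → Integrable fun x => ‖x‖ ^ k * ‖f x‖ :=
    fun k hk => hf k (mod_cast hk)
  have hsmooth := VectorFourier.contDiff_fourierIntegral planePairing hf'
  rw [paperFT_eq_smul_fourierIntegral, iteratedFDeriv_const_smul_apply hsmooth.contDiffAt,
    norm_smul, Real.norm_of_nonneg (by positivity),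
    VectorFourier.iteratedFDeriv_fourierIntegral _ hf' hfm le_rfl, ← integral_const_mul]
  gcongr
  refine (VectorFourier.norm_fourierIntegral_le_integral_norm _ _ _ _ _).trans ?_
  refine integral_mono
    (VectorFourier.integrable_fourierPowSMulRight _ (hf n le_rfl) hfm).norm
    ((hf n le_rfl).const_mul _) fun x => ?_
  calc ‖VectorFourier.fourierPowSMulRight planePairing f x n‖
    _ ≤ (2 * π * ‖planePairing‖) ^ n * ‖x‖ ^ n * ‖f x‖ :=
      VectorFourier.norm_fourierPowSMulRight_le _ f x n
    _ ≤ 2 ^ n * (‖x‖ ^ n * ‖f x‖) := by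
      rw [← mul_assoc]
      gcongr
      exact two_pi_mul_norm_planePairing_le

lemma volume_real_closedBall_prod (x : ℝ × ℝ) {R : ℝ} (hR : 0 ≤ R) :
    volume.real (closedBall x R) = (2 * R) ^ 2 := by
  rw [← closedBall_prod_same, Measure.volume_eq_prod, measureReal_prod_prod,
    Real.volume_real_closedBall hR, Real.volume_real_closedBall hR, sq]

lemma norm_iteratedFDeriv_paperFT_le_of_support_subset {R B : ℝ} (hR : 0 ≤ R)
    (hfm : AEStronglyMeasurable f) (hfR : support f ⊆ closedBall 0 R) (hfB : ∀ x, ‖f x‖ ≤ B)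
    (n : ℕ) (ξ : ℝ × ℝ) :
    ‖iteratedFDeriv ℝ n (paperFT f) ξ‖ ≤ (2 * R) ^ n * (R / π) ^ 2 * B := by
  have hzero (k : ℕ) : ∀ x ∉ closedBall (0 : ℝ × ℝ) R, ‖x‖ ^ k * ‖f x‖ = 0 := fun x hx => by
    rw [notMem_support.1 (notMem_subset hfR hx), norm_zero, mul_zero]
  have hbound (k : ℕ) : ∀ x ∈ closedBall (0 : ℝ × ℝ) R, ‖‖x‖ ^ k * ‖f x‖‖ ≤ R ^ k * B :=
    fun x hx => by
      rw [norm_mul, norm_pow, norm_norm, norm_norm]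
      gcongr
      exacts [mem_closedBall_zero_iff.1 hx, hfB x]
  have hfinite : volume (closedBall (0 : ℝ × ℝ) R) < ⊤ := measure_closedBall_lt_top
  have hint (k : ℕ) : Integrable fun x => ‖x‖ ^ k * ‖f x‖ := by
    refine (integrableOn_iff_integrable_of_support_subset (s := closedBall 0 R) ?_).1 ?_
    · exact support_subset_iff'.2 (hzero k)
    · exact Measure.integrableOn_of_bounded hfinite.ne
        ((continuous_norm.pow k).aestronglyMeasurable.mul hfm.norm)
        (ae_restrict_of_forall_mem measurableSet_closedBall (hbound k))
  have hmoment : ∫ x, ‖x‖ ^ n * ‖f x‖ ≤ R ^ n * B * (2 * R) ^ 2 := by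
    rw [← setIntegral_eq_integral_of_forall_compl_eq_zero (hzero n),
      ← volume_real_closedBall_prod 0 hR]
    exact (le_norm_self _).trans (norm_setIntegral_le_of_norm_le_const hfinite (hbound n))
  calc ‖iteratedFDeriv ℝ n (paperFT f) ξ‖
    _ ≤ (4 * π ^ 2)⁻¹ * (2 ^ n * ∫ x, ‖x‖ ^ n * ‖f x‖) :=
      norm_iteratedFDeriv_paperFT_le (fun k _ => hint k) hfm ξ
    _ ≤ (4 * π ^ 2)⁻¹ * (2 ^ n * (R ^ n * B * (2 * R) ^ 2)) := by gcongr
    _ = (2 * R) ^ n * (R / π) ^ 2 * B := by field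

end PaperFT

section LowPass

lemma norm_fourierMultiplierCLM_sub_le {V F : Type*} [NormedAddCommGroup V]
    [InnerProductSpace ℝ V] [FiniteDimensional ℝ V] [MeasurableSpace V] [BorelSpace V]
    [NormedAddCommGroup F] [NormedSpace ℂ F] [CompleteSpace F] {ψ : V → ℝ}
    (hψ : HasTemperateGrowth ψ) {r : ℝ} {n : ℕ} (hψr : ∀ w, ‖ψ w - 1‖ ≤ (r * ‖w‖) ^ n)
    (g : 𝓢(V, F)) (x : V) :
    ‖fourierMultiplierCLM F ψ g x - g x‖ ≤ r ^ n * ∫ w, ‖w‖ ^ n * ‖𝓕 g w‖ := by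
  have hsub : fourierMultiplierCLM F ψ g - g = 𝓕⁻ (smulLeftCLM F ψ (𝓕 g) - 𝓕 g) := by
    rw [sub_eq_add_neg (smulLeftCLM F ψ (𝓕 g)), FourierTransform.fourierInv_add,
      FourierTransform.fourierInv_neg, FourierTransform.fourierInv_fourier_eq,
      fourierMultiplierCLM_apply, sub_eq_add_neg]
  rw [← sub_apply, hsub, fourierInv_coe, Real.fourierInv_eq, ← integral_const_mul]
  refine norm_integral_le_of_norm_le (((𝓕 g).integrable_pow_mul volume n).const_mul _)
    (Eventually.of_forall fun w => ?_)
  calc ‖𝐞 (inner ℝ w x) • (smulLeftCLM F ψ (𝓕 g) - 𝓕 g) w‖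
    _ = ‖ψ w - 1‖ * ‖𝓕 g w‖ := by
      rw [Circle.norm_smul, sub_apply, smulLeftCLM_apply_apply hψ, ← norm_smul,
        sub_smul, one_smul]
    _ ≤ (r * ‖w‖) ^ n * ‖𝓕 g w‖ := by gcongr; exact hψr w
    _ = r ^ n * (‖w‖ ^ n * ‖𝓕 g w‖) := by rw [mul_pow, mul_assoc]

/-- A Schwartz function on the plane, transported to the Euclidean plane: Mathlib's Fourier
transform lives on inner product spaces, whereas `ℝ × ℝ` carries the sup norm. -/
abbrev onEuclidean (g : 𝓢(ℝ × ℝ, ℂ)) : 𝓢(WithLp 2 (ℝ × ℝ), ℂ) :=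
  compCLMOfContinuousLinearEquiv ℂ (WithLp.prodContinuousLinearEquiv 2 ℝ ℝ ℝ) g

lemma paperFT_eq_fourier (g : 𝓢(ℝ × ℝ, ℂ)) (ξ : ℝ × ℝ) :
    paperFT g ξ =
      (1 / (4 * (π : ℂ) ^ 2)) * 𝓕 (onEuclidean g) ((2 * π)⁻¹ • WithLp.toLp 2 ξ) := by
  rw [paperFT, fourier_coe, Real.fourier_eq',
    ← (WithLp.volume_preserving_toLp (U := ℝ) (V := ℝ)).integral_comp
      (MeasurableEquiv.toLp 2 (ℝ × ℝ)).measurableEmbedding]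
  congr 2 with x
  have hpi : (π : ℂ) ≠ 0 := mod_cast Real.pi_ne_zero
  rw [real_inner_smul_right, WithLp.prod_inner_apply, smul_eq_mul, mul_comm]
  congr 2
  simp only [RCLike.inner_apply, conj_trivial]
  push_cast
  field

/-- The Fourier multiplier on the plane with symbol `freqCutoff c`, for the frequencies of
`paperFT`; these are `2π` times those of Mathlib's Fourier transform. -/
def lowPass (c : ℝ) (g : 𝓢(ℝ × ℝ, ℂ)) : 𝓢(ℝ × ℝ, ℂ) :=
  compCLMOfContinuousLinearEquiv ℂ (WithLp.prodContinuousLinearEquiv 2 ℝ ℝ ℝ).symm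
    (fourierMultiplierCLM ℂ (fun w => freqCutoff c ((2 * π) • w.ofLp)) (onEuclidean g))

lemma hasTemperateGrowth_freqCutoff_two_pi_smul_ofLp {c : ℝ} (hc : 0 < c) :
    HasTemperateGrowth fun w : WithLp 2 (ℝ × ℝ) => freqCutoff c ((2 * π) • w.ofLp) :=
  (hasTemperateGrowth_freqCutoff hc).comp
    ((2 * π) • (WithLp.prodContinuousLinearEquiv 2 ℝ ℝ ℝ : WithLp 2 (ℝ × ℝ) →L[ℝ] ℝ × ℝ)
      ).hasTemperateGrowth

lemma paperFT_lowPass {c : ℝ} (hc : 0 < c) (g : 𝓢(ℝ × ℝ, ℂ)) (ξ : ℝ × ℝ) :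
    paperFT (lowPass c g) ξ = freqCutoff c ξ • paperFT g ξ := by
  have hfourier : 𝓕 (onEuclidean (lowPass c g)) =
      smulLeftCLM ℂ (fun w => freqCutoff c ((2 * π) • w.ofLp)) (𝓕 (onEuclidean g)) := by
    have htransport : onEuclidean (lowPass c g) =
        fourierMultiplierCLM ℂ (fun w => freqCutoff c ((2 * π) • w.ofLp)) (onEuclidean g) := rfl
    rw [htransport, fourierMultiplierCLM_apply, FourierTransform.fourier_fourierInv_eq]
  rw [paperFT_eq_fourier, paperFT_eq_fourier, hfourier,
    smulLeftCLM_apply_apply (hasTemperateGrowth_freqCutoff_two_pi_smul_ofLp hc), WithLp.ofLp_smul,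
    smul_inv_smul₀ Real.two_pi_pos.ne', mul_smul_comm]

lemma norm_ofLp_prod_le {p : ENNReal} [Fact (1 ≤ p)] {E F : Type*} [SeminormedAddCommGroup E]
    [SeminormedAddCommGroup F] (w : WithLp p (E × F)) : ‖w.ofLp‖ ≤ ‖w‖ :=
  max_le (WithLp.norm_fst_le _ w) (WithLp.norm_snd_le _ w)

lemma exists_norm_lowPass_sub_le (g : 𝓢(ℝ × ℝ, ℂ)) (n : ℕ) :
    ∃ K : ℝ, ∀ c, 0 < c → ∀ z, ‖lowPass c g z - g z‖ ≤ K / c ^ n := by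
  refine ⟨(4 * π) ^ n * ∫ w, ‖w‖ ^ n * ‖𝓕 (onEuclidean g) w‖, fun c hc z => ?_⟩
  have hψ (w : WithLp 2 (ℝ × ℝ)) :
      ‖freqCutoff c ((2 * π) • w.ofLp) - 1‖ ≤ (4 * π / c * ‖w‖) ^ n := by
    refine (norm_freqCutoff_sub_one_le hc _ n).trans ?_
    rw [norm_smul, Real.norm_of_nonneg Real.two_pi_pos.le]
    calc (2 * (2 * π * ‖w.ofLp‖) / c) ^ n ≤ (2 * (2 * π * ‖w‖) / c) ^ n := by
          gcongr
          exact norm_ofLp_prod_le w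
      _ = (4 * π / c * ‖w‖) ^ n := by ring
  refine (norm_fourierMultiplierCLM_sub_le (hasTemperateGrowth_freqCutoff_two_pi_smul_ofLp hc)
    hψ (onEuclidean g) (WithLp.toLp 2 z)).trans_eq ?_
  rw [div_pow]
  ring

lemma contDiff_paperFT_schwartz (g : 𝓢(ℝ × ℝ, ℂ)) : ContDiff ℝ ∞ (paperFT g) :=
  contDiff_paperFT fun k _ => g.integrable_pow_mul volume k

lemma eventually_norm_iteratedFDeriv_paperFT_lowPass_le (g : 𝓢(ℝ × ℝ, ℂ)) {n : ℕ} {B : ℝ}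
    (hB : ∀ k ≤ n, ∀ ξ, ‖iteratedFDeriv ℝ k (paperFT g) ξ‖ ≤ B) :
    ∀ᶠ c in atTop, ∀ ξ, ‖iteratedFDeriv ℝ n (paperFT (lowPass c g)) ξ‖ ≤ 2 ^ n * B := by
  have hcutoff : ∀ᶠ c : ℝ in atTop, ∀ k ≤ n, ∀ ξ : ℝ × ℝ,
      ‖iteratedFDeriv ℝ k (freqCutoff c) ξ‖ ≤ 1 :=
    (eventually_all_finite (finite_Iic n)).2
      fun k _ => eventually_norm_iteratedFDeriv_freqCutoff_le_one k
  filter_upwards [hcutoff, eventually_gt_atTop 0] with c hc hc0 ξ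
  rw [funext (paperFT_lowPass hc0 g), ← one_mul B]
  exact norm_iteratedFDeriv_smul_le_two_pow_mul (contDiff_freqCutoff (n := n) c)
    ((contDiff_paperFT_schwartz g).of_le (mod_cast le_top)) (fun k hk => hc k hk ξ)
    (fun k hk => hB k hk ξ)

end LowPass

section Approximation

lemma closedBall_zero_eq_Icc_prod (r : ℝ) :
    closedBall (0 : ℝ × ℝ) r = Icc ((-r, -r) : ℝ × ℝ) ((r, r) : ℝ × ℝ) := by
  rw [← Prod.mk_zero_zero, ← closedBall_prod_same, Real.closedBall_zero_eq_Icc, Icc_prod_Icc]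

variable {Ω : Set (ℝ × ℝ)} {f : ℝ × ℝ → ℂ}

lemma supOn_nonneg : 0 ≤ supOn f Ω :=
  Real.iSup_nonneg fun _ => norm_nonneg _

lemma norm_le_supOn (hΩ : IsCompact Ω) (hf : ContinuousOn f Ω) {z : ℝ × ℝ} (hz : z ∈ Ω) :
    ‖f z‖ ≤ supOn f Ω := by
  obtain ⟨B, hB⟩ := hΩ.exists_bound_of_continuousOn hf
  exact le_ciSup (f := fun z : Ω => ‖f z‖) ⟨B, forall_mem_range.2 fun z => hB z z.2⟩ ⟨z, hz⟩

lemma exists_schwartz_extension (hΩ : IsCompact Ω) {R : ℝ} (hΩR : Ω ⊆ ball 0 R)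
    {U : Set (ℝ × ℝ)} (hU : IsOpen U) (hΩU : Ω ⊆ U) (hf : ContDiffOn ℝ ∞ f U) :
    ∃ g : 𝓢(ℝ × ℝ, ℂ), EqOn g f Ω ∧ (∀ z, ‖g z‖ ≤ 2 * supOn f Ω) ∧
      support g ⊆ closedBall 0 R := by
  have hsup : ∀ z ∈ Ω, ‖f z‖ ≤ supOn f Ω :=
    fun z hz => norm_le_supOn hΩ (hf.continuousOn.mono hΩU) hz
  rcases (supOn_nonneg (f := f) (Ω := Ω)).eq_or_lt with hzero | hpos
  · refine ⟨0, fun z hz => ?_, fun z => ?_, ?_⟩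
    · exact (norm_le_zero_iff.1 (hzero ▸ hsup z hz)).symm
    · simp [← hzero]
    · simp
  let W := (U ∩ f ⁻¹' ball 0 (2 * supOn f Ω)) ∩ ball 0 R
  have hW : IsOpen W := (hf.continuousOn.isOpen_inter_preimage hU isOpen_ball).inter isOpen_ball
  have hΩW : Ω ⊆ W := fun z hz =>
    ⟨⟨hΩU hz, mem_ball_zero_iff.2 (by linarith [hsup z hz])⟩, hΩR hz⟩
  obtain ⟨g, hg, hgf, hgW, hgle⟩ :=
    exists_contDiff_eqOn_norm_le hΩ.isClosed hW hΩW (hf.mono fun z hz => hz.1.1)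
  have hgR : support g ⊆ closedBall 0 R :=
    hgW.trans (inter_subset_right.trans ball_subset_closedBall)
  have hgc : HasCompactSupport g := .of_support_subset_isCompact (isCompact_closedBall 0 R) hgR
  refine ⟨hgc.toSchwartzMap hg, hgf, fun z => ?_, hgR⟩
  by_cases hz : z ∈ support g
  · exact (hgle z).trans (mem_ball_zero_iff.1 (hgW hz).1.2).le
  · exact (norm_eq_zero.2 (notMem_support.1 hz)).trans_le (by positivity)

/-- `fb` is a bandlimited approximation to `f` on `Ω` with bandwidth `c` and error `ε`. Since
`ℝ × ℝ` carries the sup norm, `paperFT_eq_zero` says that the spectrum lies in a square. -/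
structure IsBandlimitedApprox (Ω : Set (ℝ × ℝ)) (f : ℝ × ℝ → ℂ) (c ε : ℝ)
    (fb : 𝓢(ℝ × ℝ, ℂ)) : Prop where
  paperFT_eq_zero : ∀ ξ, c ≤ ‖ξ‖ → paperFT fb ξ = 0
  norm_sub_le : ∀ z ∈ Ω, ‖fb z - f z‖ ≤ ε
  norm_le : ∀ z, ‖fb z‖ ≤ 2 * supOn f Ω + ε
  norm_mderiv2_paperFT_le : ∀ α : ℕ × ℕ, α.1 + α.2 ≤ 2 → ∀ ξ,
    ‖mderiv2 α (paperFT fb) ξ‖ ≤ 10 * supOn f Ω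

lemma IsBandlimitedApprox.mono {c ε ε' : ℝ} {fb : 𝓢(ℝ × ℝ, ℂ)}
    (h : IsBandlimitedApprox Ω f c ε fb) (hε : ε ≤ ε') : IsBandlimitedApprox Ω f c ε' fb where
  paperFT_eq_zero := h.paperFT_eq_zero
  norm_sub_le z hz := (h.norm_sub_le z hz).trans hε
  norm_le z := (h.norm_le z).trans (by gcongr)
  norm_mderiv2_paperFT_le := h.norm_mderiv2_paperFT_le

lemma isBandlimitedApprox_zero (hΩ : IsCompact Ω) (hf : ContinuousOn f Ω) {ε : ℝ}
    (hε : supOn f Ω ≤ ε) (c : ℝ) : IsBandlimitedApprox Ω f c ε 0 where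
  paperFT_eq_zero ξ _ := by simp [paperFT]
  norm_sub_le z hz := by simpa using (norm_le_supOn hΩ hf hz).trans hε
  norm_le z := by
    have hsup : 0 ≤ supOn f Ω := supOn_nonneg
    simp only [zero_apply, norm_zero]
    linarith
  norm_mderiv2_paperFT_le α _ ξ := by
    have hzero : paperFT (0 : 𝓢(ℝ × ℝ, ℂ)) = 0 := by
      ext ξ
      simp [paperFT]
    refine (norm_mderiv2_le (contDiff_paperFT_schwartz 0) α ξ).trans ?_
    rw [hzero, iteratedFDeriv_zero, Pi.zero_apply, norm_zero]
    exact mul_nonneg (by norm_num) supOn_nonneg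

lemma eventually_norm_mderiv2_paperFT_lowPass_le {g : 𝓢(ℝ × ℝ, ℂ)} {M : ℝ}
    (hgM : ∀ z, ‖g z‖ ≤ 2 * M) (hgR : support g ⊆ closedBall 0 (5 / 4)) :
    ∀ᶠ c in atTop, ∀ α : ℕ × ℕ, α.1 + α.2 ≤ 2 → ∀ ξ,
      ‖mderiv2 α (paperFT (lowPass c g)) ξ‖ ≤ 10 * M := by
  have hM : 0 ≤ M := by linarith [(norm_nonneg _).trans (hgM 0)]
  have hfourier : ∀ k ≤ 2, ∀ ξ, ‖iteratedFDeriv ℝ k (paperFT g) ξ‖ ≤ 5 / 2 * M := fun k hk ξ => by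
    calc ‖iteratedFDeriv ℝ k (paperFT g) ξ‖
      _ ≤ (2 * (5 / 4)) ^ k * (5 / 4 / π) ^ 2 * (2 * M) :=
        norm_iteratedFDeriv_paperFT_le_of_support_subset (by norm_num)
          g.continuous.aestronglyMeasurable hgR hgM k ξ
      _ ≤ (2 * (5 / 4)) ^ 2 * (5 / 4 / 3) ^ 2 * (2 * M) := by
        gcongr
        · norm_num
        · exact Real.pi_gt_three.le
      _ ≤ 5 / 2 * M := by linarith
  have hlowPass : ∀ᶠ c in atTop, ∀ n ≤ 2, ∀ ξ,
      ‖iteratedFDeriv ℝ n (paperFT (lowPass c g)) ξ‖ ≤ 2 ^ n * (5 / 2 * M) :=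
    (eventually_all_finite (finite_Iic 2)).2 fun n hn =>
      eventually_norm_iteratedFDeriv_paperFT_lowPass_le g fun k hk => hfourier k (hk.trans hn)
  filter_upwards [hlowPass] with c hc α hα ξ
  calc ‖mderiv2 α (paperFT (lowPass c g)) ξ‖
    _ ≤ ‖iteratedFDeriv ℝ (α.1 + α.2) (paperFT (lowPass c g)) ξ‖ :=
      norm_mderiv2_le (contDiff_paperFT_schwartz _) α ξ
    _ ≤ 2 ^ (α.1 + α.2) * (5 / 2 * M) := hc _ hα ξ
    _ ≤ 2 ^ 2 * (5 / 2 * M) := by gcongr; norm_num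
    _ = 10 * M := by ring

lemma exists_eventually_isBandlimitedApprox_lowPass {g : 𝓢(ℝ × ℝ, ℂ)} (hgf : EqOn g f Ω)
    (hgM : ∀ z, ‖g z‖ ≤ 2 * supOn f Ω) (hgR : support g ⊆ closedBall 0 (5 / 4)) (n : ℕ) :
    ∃ K : ℝ, ∀ᶠ c in atTop, IsBandlimitedApprox Ω f c (K / c ^ n) (lowPass c g) := by
  obtain ⟨K, hK⟩ := exists_norm_lowPass_sub_le g n
  refine ⟨K, ?_⟩
  filter_upwards [eventually_norm_mderiv2_paperFT_lowPass_le hgM hgR, eventually_gt_atTop 0]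
    with c hderiv hc
  refine ⟨fun ξ hξ => ?_, fun z hz => ?_, fun z => ?_, hderiv⟩
  · rw [paperFT_lowPass hc, freqCutoff_eq_zero hc hξ, zero_smul]
  · rw [← hgf hz]
    exact hK c hc z
  · exact (norm_le_norm_add_norm_sub' _ _).trans (add_le_add (hgM z) (hK c hc z))

lemma exists_isBandlimitedApprox (hΩ : IsCompact Ω) (hΩR : Ω ⊆ ball 0 (5 / 4))
    {U : Set (ℝ × ℝ)} (hU : IsOpen U) (hΩU : Ω ⊆ U) (hf : ContDiffOn ℝ ∞ f U) (n : ℕ) :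
    ∃ C : ℝ, ∀ c, 0 < c → ∃ fb, IsBandlimitedApprox Ω f c (C / c ^ n) fb := by
  obtain ⟨g, hgf, hgM, hgR⟩ := exists_schwartz_extension hΩ hΩR hU hΩU hf
  obtain ⟨K, hK⟩ := exists_eventually_isBandlimitedApprox_lowPass hgf hgM hgR n
  obtain ⟨c₀, hc₀⟩ := eventually_atTop.1 hK
  refine ⟨max K (supOn f Ω * c₀ ^ n), fun c hc => ?_⟩
  rcases le_total c₀ c with hlarge | hsmall
  · refine ⟨lowPass c g, (hc₀ c hlarge).mono ?_⟩
    gcongr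
    exact le_max_left _ _
  · refine ⟨0, isBandlimitedApprox_zero hΩ (hf.continuousOn.mono hΩU) ?_ c⟩
    rw [le_div_iff₀ (by positivity)]
    refine le_max_of_le_right ?_
    gcongr
    exact supOn_nonneg

end Approximation

/-- Existence of bandlimited approximations: for `f` smooth near a closed
set `Ω ⊆ [-1,1]²` and every `m ≥ 1` there is a constant `C(m,f)` such that for every `c > 1`
there is a Schwartz function `f_b` whose Fourier transform is supported in `[-c-4, c+4]²`,
with `|f_b - f| ≤ C/c^{2m}` on `Ω`, `|f_b| ≤ 2 sup_Ω |f| + C/c^{2m}` on `ℝ²`, and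
`|D^α f̂_b| ≤ 10 sup_Ω |f|` for all `|α| ≤ 2`. -/
theorem bandlimited_approximation (Ω : Set (ℝ × ℝ)) (hΩclosed : IsClosed Ω)
    (hΩsub : Ω ⊆ Set.Icc ((-1, -1) : ℝ × ℝ) ((1, 1) : ℝ × ℝ))
    (f : ℝ × ℝ → ℂ)
    (hf : ∃ U : Set (ℝ × ℝ), IsOpen U ∧ Ω ⊆ U ∧ ContDiffOn ℝ (⊤ : ℕ∞) f U)
    (m : ℕ) (hm : 0 < m) :
    ∃ C : ℝ, ∀ c : ℝ, 1 < c → ∃ fb : SchwartzMap (ℝ × ℝ) ℂ,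
      (∀ ξ : ℝ × ℝ, ξ ∉ Set.Icc ((-(c + 4), -(c + 4)) : ℝ × ℝ) ((c + 4, c + 4) : ℝ × ℝ) →
        paperFT (⇑fb) ξ = 0) ∧
      (∀ z ∈ Ω, ‖fb z - f z‖ ≤ C / c ^ (2 * m)) ∧
      (∀ z : ℝ × ℝ, ‖fb z‖ ≤ 2 * supOn f Ω + C / c ^ (2 * m)) ∧
      (∀ α : ℕ × ℕ, α.1 + α.2 ≤ 2 → ∀ ξ : ℝ × ℝ,
        ‖mderiv2 α (paperFT ⇑fb) ξ‖ ≤ 10 * supOn f Ω) := by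
  obtain ⟨U, hU, hΩU, hfU⟩ := hf
  have hΩ : IsCompact Ω := isCompact_Icc.of_isClosed_subset hΩclosed hΩsub
  have hΩball : Ω ⊆ ball 0 (5 / 4) := by
    rw [← closedBall_zero_eq_Icc_prod] at hΩsub
    exact hΩsub.trans (closedBall_subset_ball (by norm_num))
  obtain ⟨C, hC⟩ := exists_isBandlimitedApprox hΩ hΩball hU hΩU hfU (2 * m)
  refine ⟨C, fun c hc => ?_⟩
  obtain ⟨fb, hfb⟩ := hC c (one_pos.trans hc)
  refine ⟨fb, fun ξ hξ => hfb.paperFT_eq_zero ξ ?_, hfb.norm_sub_le, hfb.norm_le,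
    hfb.norm_mderiv2_paperFT_le⟩
  rw [← closedBall_zero_eq_Icc_prod, mem_closedBall_zero_iff, not_le] at hξ
  linarith
end
end

section
/- Let φ be a tempered distribution on ℝ² whose Fourier transform is a tempered distribution of order at most p supported in the square [−c,c]². Then φ coincides with (is represented by integration against) an entire function of the form φ(x,y) = Σ_{|α|≤p} (x,y)^α ∫_{[−c,c]²} e^{i(ξ₁x + ξ₂y)} dμ_α(ξ₁,ξ₂), where each μ_α is a complex Radon measure on [−c,c]², and (x,y)^α denotes the monomial x^{α₁} y^{α₂}. -/
open MeasureTheory Real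

noncomputable section

/-- Tempered distributions on `ℝ²`. -/
abbrev TDist2 := SchwartzMap (ℝ × ℝ) ℂ →L[ℂ] ℂ

/-- The support of a tempered distribution on `ℝ²`. -/
def distSupport2 (T : TDist2) : Set (ℝ × ℝ) :=
  (⋃₀ {U : Set (ℝ × ℝ) |
    IsOpen U ∧ ∀ ψ : SchwartzMap (ℝ × ℝ) ℂ, tsupport ⇑ψ ⊆ U → T ψ = 0})ᶜ

/-- A tempered distribution on `ℝ²` has order at most `p`. -/
def hasOrderAtMost2 (T : TDist2) (p : ℕ) : Prop :=
  ∀ K : Set (ℝ × ℝ), IsCompact K → ∃ M : ℝ,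
    ∀ ψ : SchwartzMap (ℝ × ℝ) ℂ, tsupport ⇑ψ ⊆ K →
      ∀ B : ℝ, 0 ≤ B →
        (∀ α : ℕ × ℕ, α.1 + α.2 ≤ p → ∀ x ∈ K, ‖mderiv2 α (⇑ψ) x‖ ≤ B) →
        ‖T ψ‖ ≤ M * B

/-!
The work is to bound `T' ψ` by the derivatives of `ψ` of order at most `p` on the square `K` itself;
the order of `T'` and its support only give this on a neighbourhood of `K`. For `c > 0`, if those
derivatives are at most `B` on `K`, they are at most `B + ε` on a slightly larger square, and
reflecting across its sides yields a smooth function which agrees with `ψ` there and whose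
derivatives are at most `C (B + ε)` everywhere near `K`, with `C` independent of `ε`. For `c = 0`,
cutting off at scale `r` shows that `T'` kills every function whose `p`-jet vanishes at the origin.
Such a bound makes `T'` a continuous functional of finitely many elements of `C(K)`, namely the
derivatives of `ψ`, so Hahn-Banach and the Riesz representation theorem provide the measures.
Evaluating at an inverse Fourier transform and exchanging the integrals gives the formula for `T`.
-/
section RieszRepresentation

open scoped NNReal ENNReal CompactlySupported

lemma exists_add_eq_of_norm_le_add {X E : Type*} [TopologicalSpace X] [NormedAddCommGroup E]
    [NormedSpace ℝ E] (g : C(X, E)) (f₁ f₂ : C(X, ℝ≥0)) (h : ∀ x, ‖g x‖₊ ≤ f₁ x + f₂ x) :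
    ∃ g₁ g₂ : C(X, E), g = g₁ + g₂ ∧ (∀ x, ‖g₁ x‖₊ ≤ f₁ x) ∧ ∀ x, ‖g₂ x‖₊ ≤ f₂ x := by
  -- `g₁ x` is the radial projection of `g x` to the closed ball of radius `f₁ x`.
  let r : X → ℝ := fun x => min ‖g x‖ (f₁ x) / ‖g x‖
  have r_nonneg : ∀ x, 0 ≤ r x := fun x => by positivity
  have norm_mul_r : ∀ x, r x * ‖g x‖ = min ‖g x‖ (f₁ x) := fun x =>
    div_mul_cancel_of_imp fun hx => by simp [hx]
  have continuous_r_smul : Continuous fun x => r x • g x := by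
    refine continuous_iff_continuousAt.2 fun x => ?_
    by_cases hx : g x = 0
    · have bound : ∀ y, ‖r y • g y‖ ≤ ‖g y‖ := fun y => by
        rw [norm_smul, Real.norm_of_nonneg (r_nonneg y), norm_mul_r]
        exact min_le_left _ _
      have : Filter.Tendsto (fun y => ‖g y‖) (nhds x) (nhds 0) := by
        simpa [hx] using (g.continuous.norm.tendsto x)
      simpa [ContinuousAt, hx] using squeeze_zero_norm bound this
    · have hx' : ‖g x‖ ≠ 0 := norm_ne_zero_iff.2 hx
      exact ContinuousAt.smul (ContinuousAt.div (by fun_prop) (by fun_prop) hx') (by fun_prop)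
  refine ⟨⟨_, continuous_r_smul⟩, g - ⟨_, continuous_r_smul⟩, by abel, fun x => ?_, fun x => ?_⟩
  · rw [← NNReal.coe_le_coe, coe_nnnorm, ContinuousMap.coe_mk, norm_smul,
      Real.norm_of_nonneg (r_nonneg x), norm_mul_r]
    exact min_le_right _ _
  · have r_le_one : r x ≤ 1 := div_le_one_of_le₀ (min_le_left _ _) (norm_nonneg _)
    have hx : ‖g x‖ ≤ f₁ x + f₂ x := h x
    have : (g - ⟨_, continuous_r_smul⟩ : C(X, E)) x = (1 - r x) • g x := by
      simp [sub_smul]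
    rw [← NNReal.coe_le_coe, coe_nnnorm, this, norm_smul, Real.norm_of_nonneg (by linarith),
      sub_mul, norm_mul_r, one_mul, tsub_le_iff_left, ← min_add_add_right]
    exact le_min (by simp) hx

lemma nnreal_iSup_add_iSup_le {ι κ : Type*} [Nonempty ι] [Nonempty κ] {f : ι → ℝ≥0} {g : κ → ℝ≥0}
    {a : ℝ≥0} (h : ∀ i j, f i + g j ≤ a) : iSup f + iSup g ≤ a := by
  have f_le : ∀ i, f i ≤ a := fun i => le_self_add.trans (h i (Classical.arbitrary κ))
  have g_le : iSup g ≤ a := ciSup_le fun j => le_add_self.trans (h (Classical.arbitrary ι) j)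
  refine (le_tsub_iff_right g_le).1 (ciSup_le fun i => (le_tsub_iff_right g_le).2 ?_)
  exact (le_tsub_iff_left (f_le i)).1 (ciSup_le fun j => (le_tsub_iff_left (f_le i)).2 (h i j))

section Variation

variable {X 𝕜 : Type*} [TopologicalSpace X] [CompactSpace X] [RCLike 𝕜]

/-- The total variation `|L|(f) = sup {‖L g‖ : |g| ≤ f}` of a functional `L` on `C(X, 𝕜)`,
evaluated at a nonnegative function `f`. -/
def variation (L : C(X, 𝕜) →L[𝕜] 𝕜) (f : C(X, ℝ≥0)) : ℝ≥0 :=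
  ⨆ g : {g : C(X, 𝕜) // ∀ x, ‖g x‖₊ ≤ f x}, ‖L g‖₊

instance nonempty_dominated (f : C(X, ℝ≥0)) : Nonempty {g : C(X, 𝕜) // ∀ x, ‖g x‖₊ ≤ f x} :=
  ⟨⟨0, by simp⟩⟩

lemma nnnorm_le_variation (L : C(X, 𝕜) →L[𝕜] 𝕜) {f : C(X, ℝ≥0)} {g : C(X, 𝕜)}
    (hg : ∀ x, ‖g x‖₊ ≤ f x) : ‖L g‖₊ ≤ variation L f := by
  obtain ⟨C, hC⟩ := (isCompact_range f.continuous).bddAbove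
  have bdd : BddAbove (Set.range
      fun g : {g : C(X, 𝕜) // ∀ x, ‖g x‖₊ ≤ f x} => ‖L g‖₊) := by
    refine ⟨‖L‖₊ * C, Set.forall_mem_range.2 fun g => (L.le_opNNNorm _).trans ?_⟩
    gcongr
    exact (ContinuousMap.norm_le _ C.2).2 fun x => (g.2 x).trans (hC ⟨x, rfl⟩)
  exact le_ciSup bdd ⟨g, hg⟩

lemma variation_add (L : C(X, 𝕜) →L[𝕜] 𝕜) (f₁ f₂ : C(X, ℝ≥0)) :
    variation L (f₁ + f₂) = variation L f₁ + variation L f₂ := by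
  apply le_antisymm
  · refine ciSup_le fun ⟨g, hg⟩ => ?_
    obtain ⟨g₁, g₂, rfl, h₁, h₂⟩ := exists_add_eq_of_norm_le_add g f₁ f₂ hg
    calc ‖L (g₁ + g₂)‖₊ ≤ ‖L g₁‖₊ + ‖L g₂‖₊ := by rw [map_add]; exact nnnorm_add_le _ _
      _ ≤ _ := add_le_add (nnnorm_le_variation L h₁) (nnnorm_le_variation L h₂)
  · refine nnreal_iSup_add_iSup_le fun ⟨g₁, h₁⟩ ⟨g₂, h₂⟩ => ?_
    -- Rotating `g₁` and `g₂` makes `L g₁` and `L g₂` nonnegative, so that their norms add up.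
    obtain ⟨u₁, hu₁, e₁⟩ := RCLike.exists_norm_eq_mul_self (L g₁)
    obtain ⟨u₂, hu₂, e₂⟩ := RCLike.exists_norm_eq_mul_self (L g₂)
    have hL : ‖L g₁‖₊ + ‖L g₂‖₊ = ‖L (u₁ • g₁ + u₂ • g₂)‖₊ := by
      apply NNReal.eq
      rw [map_add, map_smul, map_smul, smul_eq_mul, smul_eq_mul, ← e₁, ← e₂, ← RCLike.ofReal_add,
        coe_nnnorm, RCLike.norm_of_nonneg (by positivity)]
      rfl
    refine hL.trans_le (nnnorm_le_variation L fun x => (nnnorm_add_le _ _).trans ?_)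
    have norm_rotate : ∀ (u : 𝕜) (g : C(X, 𝕜)), ‖u‖ = 1 → ‖(u • g) x‖₊ = ‖g x‖₊ := by
      intro u g hu
      apply NNReal.eq
      simp [hu]
    rw [norm_rotate u₁ g₁ hu₁, norm_rotate u₂ g₂ hu₂]
    exact add_le_add (h₁ x) (h₂ x)

lemma variation_smul (L : C(X, 𝕜) →L[𝕜] 𝕜) (c : ℝ≥0) (f : C(X, ℝ≥0)) :
    variation L (c • f) = c * variation L f := by
  have mul_le : ∀ (c : ℝ≥0) (f : C(X, ℝ≥0)), c * variation L f ≤ variation L (c • f) := by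
    intro c f
    rw [variation, NNReal.mul_iSup]
    refine ciSup_le fun ⟨g, hg⟩ => ?_
    have : c * ‖L g‖₊ = ‖L (((c : ℝ) : 𝕜) • g)‖₊ := by
      apply NNReal.eq
      simp [norm_smul]
    rw [this]
    refine nnnorm_le_variation L fun x => ?_
    rw [← NNReal.coe_le_coe]
    simpa [norm_smul] using mul_le_mul_of_nonneg_left (NNReal.coe_le_coe.2 (hg x)) c.2
  refine (mul_le c f).antisymm' ?_
  rcases eq_or_ne c 0 with rfl | hc
  · refine ciSup_le fun ⟨g, hg⟩ => ?_
    have : g = 0 := by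
      ext x
      simpa using hg x
    simp [this]
  · simpa [smul_smul, hc, inv_mul_le_iff₀ (pos_iff_ne_zero.2 hc)] using mul_le c⁻¹ (c • f)

lemma exists_measure_norm_le_integral_norm [T2Space X] [MeasurableSpace X] [BorelSpace X]
    (L : C(X, 𝕜) →L[𝕜] 𝕜) :
    ∃ μ : Measure X, IsFiniteMeasure μ ∧ ∀ g : C(X, 𝕜), ‖L g‖ ≤ ∫ x, ‖g x‖ ∂μ := by
  let Λ : C_c(X, ℝ≥0) →ₗ[ℝ≥0] ℝ≥0 :=
    { toFun := fun f => variation L f.toContinuousMap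
      map_add' := fun f₁ f₂ => variation_add L f₁.toContinuousMap f₂.toContinuousMap
      map_smul' := fun c f => variation_smul L c f.toContinuousMap }
  refine ⟨NNRealRMK.rieszMeasure Λ, inferInstance, fun g => ?_⟩
  let f : C_c(X, ℝ≥0) := ⟨⟨fun x => ‖g x‖₊, by fun_prop⟩, HasCompactSupport.of_compactSpace _⟩
  calc ‖L g‖ ≤ variation L f.toContinuousMap := nnnorm_le_variation L fun _ => le_rfl
    _ = ∫ x, (f x : ℝ) ∂NNRealRMK.rieszMeasure Λ := (NNRealRMK.integral_rieszMeasure Λ f).symm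

end Variation

lemma exists_continuousLinearMap_comp_eq {𝕜 E F : Type*} [RCLike 𝕜] [AddCommGroup E] [Module 𝕜 E]
    [NormedAddCommGroup F] [NormedSpace 𝕜 F] (J : E →ₗ[𝕜] F) (T : E →ₗ[𝕜] 𝕜) (C : ℝ)
    (h : ∀ x, ‖T x‖ ≤ C * ‖J x‖) : ∃ L : F →L[𝕜] 𝕜, ∀ x, L (J x) = T x := by
  have ker_le : LinearMap.ker J ≤ LinearMap.ker T := fun x hx => by
    simpa [LinearMap.mem_ker.1 hx] using h x
  let T₀ : LinearMap.range J →ₗ[𝕜] 𝕜 :=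
    ((LinearMap.ker J).liftQ T ker_le).comp (J.quotKerEquivRange.symm : _ →ₗ[𝕜] _)
  have T₀_apply : ∀ x, T₀ ⟨J x, LinearMap.mem_range_self J x⟩ = T x := fun x => by
    have : J.quotKerEquivRange.symm ⟨J x, LinearMap.mem_range_self J x⟩
        = (LinearMap.ker J).mkQ x := by
      rw [LinearEquiv.symm_apply_eq]
      rfl
    simp [T₀, this]
  obtain ⟨L, hL, -⟩ := exists_extension_norm_eq _ (T₀.mkContinuous C (by
    rintro ⟨_, x, rfl⟩
    exact (congrArg norm (T₀_apply x)).trans_le (h x)))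
  exact ⟨L, fun x => (hL ⟨J x, LinearMap.mem_range_self J x⟩).trans (T₀_apply x)⟩

lemma integral_norm_le_mul_norm_toLp_two {X 𝕜 : Type*} [RCLike 𝕜] [TopologicalSpace X]
    [CompactSpace X] [MeasurableSpace X] [BorelSpace X] (μ : Measure X) [IsFiniteMeasure μ]
    (g : C(X, 𝕜)) :
    ∫ x, ‖g x‖ ∂μ ≤ μ.real Set.univ ^ (1 / 2 : ℝ) * ‖ContinuousMap.toLp (E := 𝕜) 2 μ 𝕜 g‖ := by
  have hg : MemLp g 2 μ := (Lp.memLp (ContinuousMap.toLp (E := 𝕜) 2 μ 𝕜 g)).ae_eq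
    (ContinuousMap.coeFn_toLp μ g)
  have norm_toLp : ‖ContinuousMap.toLp (E := 𝕜) 2 μ 𝕜 g‖ = (eLpNorm g 2 μ).toReal := by
    rw [Lp.norm_def, eLpNorm_congr_ae (ContinuousMap.coeFn_toLp μ g)]
  rw [norm_toLp, integral_norm_eq_lintegral_enorm hg.1, ← eLpNorm_one_eq_lintegral_enorm,
    measureReal_def, ENNReal.toReal_rpow, mul_comm, ← ENNReal.toReal_mul]
  refine ENNReal.toReal_mono (ENNReal.mul_ne_top hg.2.ne
    (ENNReal.rpow_ne_top_of_nonneg (by norm_num) (measure_ne_top _ _))) ?_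
  convert eLpNorm_le_eLpNorm_mul_rpow_measure_univ (p := 1) (q := 2) (by norm_num) hg.1 using 3
  norm_num

lemma exists_density_of_norm_le_integral_norm {X 𝕜 : Type*} [RCLike 𝕜] [TopologicalSpace X]
    [CompactSpace X] [MeasurableSpace X] [BorelSpace X] {μ : Measure X} [IsFiniteMeasure μ]
    (L : C(X, 𝕜) →L[𝕜] 𝕜) (hL : ∀ g : C(X, 𝕜), ‖L g‖ ≤ ∫ x, ‖g x‖ ∂μ) :
    ∃ h : X → 𝕜, Measurable h ∧ Integrable h μ ∧ ∀ f : C(X, 𝕜), L f = ∫ x, f x * h x ∂μ := by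
  -- `L` is bounded for the norm of `L²(μ)`, so Fréchet–Riesz applies.
  obtain ⟨L₂, hL₂⟩ := exists_continuousLinearMap_comp_eq
    (ContinuousMap.toLp (E := 𝕜) 2 μ 𝕜 : C(X, 𝕜) →ₗ[𝕜] Lp 𝕜 2 μ) (L : C(X, 𝕜) →ₗ[𝕜] 𝕜) _
    fun g => (hL g).trans (integral_norm_le_mul_norm_toLp_two μ g)
  let k : Lp 𝕜 2 μ := (InnerProductSpace.toDual 𝕜 (Lp 𝕜 2 μ)).symm L₂
  have hk : MemLp (star k : Lp 𝕜 2 μ) 2 μ := Lp.memLp _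
  refine ⟨(star k : Lp 𝕜 2 μ), (Lp.stronglyMeasurable _).measurable,
    hk.integrable (by norm_num), fun f => ?_⟩
  have : L f = L₂ (ContinuousMap.toLp (E := 𝕜) 2 μ 𝕜 f) := (hL₂ f).symm
  rw [this, ← InnerProductSpace.toDual_symm_apply, L2.inner_def]
  refine integral_congr_ae ?_
  filter_upwards [ContinuousMap.coeFn_toLp (𝕜 := 𝕜) (p := 2) μ f, Lp.coeFn_star k] with x hf hk
  rw [hf, hk]
  simp [k]

lemma exists_polar_decomposition {X 𝕜 : Type*} [RCLike 𝕜] [MeasurableSpace X] {μ : Measure X}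
    {h : X → 𝕜} (hm : Measurable h) (hi : Integrable h μ) :
    ∃ (ν : Measure X) (w : X → 𝕜), IsFiniteMeasure ν ∧ Measurable w ∧ (∀ x, ‖w x‖ = 1) ∧
      ∀ f : X → 𝕜, ∫ x, f x * w x ∂ν = ∫ x, f x * h x ∂μ := by
  classical
  let w : X → 𝕜 := fun x => if h x = 0 then 1 else (‖h x‖ : 𝕜)⁻¹ * h x
  refine ⟨μ.withDensity fun x => (‖h x‖₊ : ℝ≥0∞), w, isFiniteMeasure_withDensity hi.2.ne,
    Measurable.ite (hm (measurableSet_singleton 0)) measurable_const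
      ((RCLike.measurable_ofReal.comp hm.norm).inv.mul hm), fun x => ?_, fun f => ?_⟩
  · by_cases hx : h x = 0 <;> simp [w, hx]
  · rw [integral_withDensity_eq_integral_smul (by fun_prop)]
    refine integral_congr_ae (Filter.Eventually.of_forall fun x => ?_)
    by_cases hx : h x = 0
    · simp [hx]
    · have : (‖h x‖ : 𝕜) ≠ 0 := by simpa using hx
      simp only [w, hx, if_false, NNReal.smul_def, coe_nnnorm, RCLike.real_smul_eq_coe_mul]
      field_simp

theorem exists_polar_measure_of_continuousLinearMap {X 𝕜 : Type*} [RCLike 𝕜] [TopologicalSpace X]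
    [CompactSpace X] [T2Space X] [MeasurableSpace X] [BorelSpace X] (L : C(X, 𝕜) →L[𝕜] 𝕜) :
    ∃ (ν : Measure X) (w : X → 𝕜), IsFiniteMeasure ν ∧ Measurable w ∧ (∀ x, ‖w x‖ = 1) ∧
      ∀ f : C(X, 𝕜), L f = ∫ x, f x * w x ∂ν := by
  obtain ⟨μ, hμ, hL⟩ := exists_measure_norm_le_integral_norm L
  obtain ⟨h, hm, hi, hLh⟩ := exists_density_of_norm_le_integral_norm L hL
  obtain ⟨ν, w, hν, hw, hw1, hνw⟩ := exists_polar_decomposition hm hi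
  exact ⟨ν, w, hν, hw, hw1, fun f => (hLh f).trans (hνw f).symm⟩

end RieszRepresentation

section RepresentationByMeasures

lemma exists_polar_measure_of_isCompact {Y 𝕜 : Type*} [RCLike 𝕜] [TopologicalSpace Y] [T2Space Y]
    [MeasurableSpace Y] [BorelSpace Y] {S : Set Y} (hS : IsCompact S) (L : C(S, 𝕜) →L[𝕜] 𝕜) :
    ∃ (ν : Measure Y) (w : Y → 𝕜), IsFiniteMeasure ν ∧ ν Sᶜ = 0 ∧ Measurable w ∧
      (∀ y, ‖w y‖ = 1) ∧ ∀ f : C(Y, 𝕜), L (f.restrict S) = ∫ y in S, f y * w y ∂ν := by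
  classical
  have : CompactSpace S := isCompact_iff_compactSpace.1 hS
  obtain ⟨ν, w, hν, hw, hw1, hL⟩ := exists_polar_measure_of_continuousLinearMap L
  have val_emb : MeasurableEmbedding (Subtype.val : S → Y) := .subtype_coe hS.measurableSet
  let w' : Y → 𝕜 := fun y => if h : y ∈ S then w ⟨y, h⟩ else 1
  refine ⟨ν.map Subtype.val, w', ν.isFiniteMeasure_map _, by simp [val_emb.map_apply],
    hw.dite measurable_const hS.measurableSet, fun y => ?_, fun f => ?_⟩
  · by_cases hy : y ∈ S <;> simp [w', hy, hw1]
  · have : (ν.map Subtype.val).restrict S = ν.map Subtype.val :=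
      Measure.restrict_eq_self_of_ae_mem (val_emb.ae_map_iff.2 (ae_of_all _ Subtype.property))
    simp [this, val_emb.integral_map, hL, w']

theorem exists_polar_measures_of_norm_le {ι V Y 𝕜 : Type*} [RCLike 𝕜] [AddCommGroup V]
    [Module 𝕜 V] [TopologicalSpace Y] [T2Space Y] [MeasurableSpace Y] [BorelSpace Y] {S : Set Y}
    (hS : IsCompact S) (s : Finset ι) (D : ι → V →ₗ[𝕜] C(Y, 𝕜)) (T : V →ₗ[𝕜] 𝕜) {M : ℝ}
    (hM : ∀ v, ∀ B, 0 ≤ B → (∀ i ∈ s, ∀ y ∈ S, ‖D i v y‖ ≤ B) → ‖T v‖ ≤ M * B) :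
    ∃ (ν : ι → Measure Y) (w : ι → Y → 𝕜), (∀ i, IsFiniteMeasure (ν i)) ∧ (∀ i, ν i Sᶜ = 0) ∧
      (∀ i, Measurable (w i)) ∧ (∀ i y, ‖w i y‖ = 1) ∧
      ∀ v, T v = ∑ i ∈ s, ∫ y in S, D i v y * w i y ∂ν i := by
  classical
  have : CompactSpace S := isCompact_iff_compactSpace.1 hS
  let restrict : C(Y, 𝕜) →ₗ[𝕜] C(S, 𝕜) :=
    (ContinuousMap.compRightAlgHom 𝕜 𝕜 ⟨Subtype.val, continuous_subtype_val⟩).toLinearMap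
  let J : V →ₗ[𝕜] s → C(S, 𝕜) := LinearMap.pi fun i => restrict ∘ₗ D i
  obtain ⟨L, hL⟩ := exists_continuousLinearMap_comp_eq J T M fun v =>
    hM v _ (norm_nonneg _) fun i hi y hy =>
      ((J v ⟨i, hi⟩).norm_coe_le_norm ⟨y, hy⟩).trans (norm_le_pi_norm (J v) ⟨i, hi⟩)
  let component : ι → C(S, 𝕜) →L[𝕜] 𝕜 := fun i =>
    if hi : i ∈ s then L ∘L ContinuousLinearMap.single 𝕜 (fun _ : s => C(S, 𝕜)) ⟨i, hi⟩ else 0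
  choose ν w hν hνS hw hw1 hνw using fun i => exists_polar_measure_of_isCompact hS (component i)
  refine ⟨ν, w, hν, hνS, hw, hw1, fun v => ?_⟩
  calc T v = L (∑ i, Pi.single i (J v i)) := by rw [Finset.univ_sum_single, hL]
    _ = ∑ i : s, component i ((D i v).restrict S) := by
      rw [map_sum]
      exact Finset.sum_congr rfl fun i _ => by simp [component]; rfl
    _ = ∑ i ∈ s, ∫ y in S, D i v y * w i y ∂ν i := by
      rw [← Finset.sum_coe_sort s]
      exact Finset.sum_congr rfl fun i _ => hνw i _

end RepresentationByMeasures

section Cutoff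

open scoped ContDiff Topology

variable {E F : Type*} [NormedAddCommGroup E] [NormedSpace ℝ E] [NormedAddCommGroup F]
  [NormedSpace ℝ F]

lemma norm_iteratedFDeriv_smul_le_pow {n : ℕ} {g : E → ℝ} {f : E → F} (hg : ContDiff ℝ n g)
    (hf : ContDiff ℝ n f) {x : E} {a b ρ : ℝ} (ha : ∀ i ≤ n, ‖iteratedFDeriv ℝ i g x‖ ≤ a * ρ ^ i)
    (hb : ∀ i ≤ n, ‖iteratedFDeriv ℝ i f x‖ ≤ b * ρ ^ i) :
    ‖iteratedFDeriv ℝ n (fun y => g y • f y) x‖ ≤ 2 ^ n * (a * b) * ρ ^ n := by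
  calc _ ≤ ∑ i ∈ Finset.range (n + 1), (n.choose i : ℝ) * ‖iteratedFDeriv ℝ i g x‖ *
        ‖iteratedFDeriv ℝ (n - i) f x‖ := norm_iteratedFDeriv_smul_le hg hf x le_rfl
    _ ≤ ∑ i ∈ Finset.range (n + 1), (n.choose i : ℝ) * (a * b * ρ ^ n) := by
      refine Finset.sum_le_sum fun i hi => ?_
      have hin : i ≤ n := by simpa [Nat.lt_succ_iff] using hi
      have : a * b * ρ ^ n = a * ρ ^ i * (b * ρ ^ (n - i)) := by
        rw [← Nat.add_sub_cancel' hin, pow_add, Nat.add_sub_cancel_left]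
        ring
      rw [mul_assoc, this]
      gcongr
      · exact (norm_nonneg _).trans (ha i hin)
      · exact ha i hin
      · exact hb _ (Nat.sub_le _ _)
    _ = 2 ^ n * (a * b) * ρ ^ n := by
      rw [← Finset.sum_mul, ← Nat.cast_sum, Nat.sum_range_choose]
      push_cast
      ring

lemma exists_norm_iteratedFDeriv_le_of_hasCompactSupport {n : ℕ} {f : E → F}
    (hf : ContDiff ℝ n f) (hc : HasCompactSupport f) :
    ∃ C, 0 ≤ C ∧ ∀ i ≤ n, ∀ x, ‖iteratedFDeriv ℝ i f x‖ ≤ C := by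
  have bound : ∀ i : ℕ, ∃ C, i ≤ n → ∀ x, ‖iteratedFDeriv ℝ i f x‖ ≤ C := fun i => by
    by_cases hi : i ≤ n
    · obtain ⟨C, hC⟩ := (hc.iteratedFDeriv i).exists_bound_of_continuous
        (hf.continuous_iteratedFDeriv (by exact_mod_cast hi))
      exact ⟨C, fun _ => hC⟩
    · exact ⟨0, fun h => absurd h hi⟩
  choose C hC using bound
  refine ⟨∑ i ∈ Finset.range (n + 1), |C i|, by positivity, fun i hi x => ?_⟩
  calc ‖iteratedFDeriv ℝ i f x‖ ≤ |C i| := (hC i hi x).trans (le_abs_self _)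
    _ ≤ _ := Finset.single_le_sum (f := fun i => |C i|) (fun _ _ => abs_nonneg _)
      (Finset.mem_range.2 (Nat.lt_succ_of_le hi))

variable [FiniteDimensional ℝ E]

/-- The smooth cut-off function which is `1` on the ball of radius `r` and `0` off the ball of
radius `2 * r`; these functions are rescalings of a single one. -/
def ballCutoff (E : Type*) [NormedAddCommGroup E] [NormedSpace ℝ E] [FiniteDimensional ℝ E]
    (r : ℝ) (x : E) : ℝ :=
  (⟨1, 2, one_pos, one_lt_two⟩ : ContDiffBump (0 : E)) (r⁻¹ • x)

lemma contDiff_ballCutoff (r : ℝ) {n : ℕ∞} : ContDiff ℝ n (ballCutoff E r) :=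
  (ContDiffBump.contDiff _).comp (contDiff_const_smul _)

lemma ballCutoff_eq_one {r : ℝ} (hr : 0 < r) {x : E} (hx : ‖x‖ ≤ r) : ballCutoff E r x = 1 := by
  refine ContDiffBump.one_of_mem_closedBall _ ?_
  rwa [mem_closedBall_zero_iff, norm_smul, norm_inv, Real.norm_of_nonneg hr.le, inv_mul_le_one₀ hr]

lemma ballCutoff_eventuallyEq_one {r : ℝ} {x : E} (hx : ‖x‖ < r) : ballCutoff E r =ᶠ[𝓝 x] 1 := by
  filter_upwards [Metric.isOpen_ball.mem_nhds (mem_ball_zero_iff.2 hx)] with y hy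
  exact ballCutoff_eq_one ((norm_nonneg x).trans_lt hx) (mem_ball_zero_iff.1 hy).le

lemma tsupport_ballCutoff_subset {r : ℝ} (hr : 0 < r) :
    tsupport (ballCutoff E r) ⊆ Metric.closedBall 0 (2 * r) := by
  refine closure_minimal (fun x hx => ?_) Metric.isClosed_closedBall
  by_contra hx'
  refine hx (ContDiffBump.zero_of_le_dist _ ?_)
  rw [mem_closedBall_zero_iff, not_le] at hx'
  rw [dist_zero_right, norm_smul, norm_inv, Real.norm_of_nonneg hr.le, le_inv_mul_iff₀ hr]
  linarith

lemma hasCompactSupport_ballCutoff {r : ℝ} (hr : 0 < r) : HasCompactSupport (ballCutoff E r) :=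
  (isCompact_closedBall _ _).of_isClosed_subset (isClosed_tsupport _)
    (tsupport_ballCutoff_subset hr)

lemma exists_norm_iteratedFDeriv_ballCutoff_le (E : Type*) [NormedAddCommGroup E]
    [NormedSpace ℝ E] [FiniteDimensional ℝ E] (n : ℕ) :
    ∃ C, 0 ≤ C ∧ ∀ r : ℝ, 0 < r → ∀ i ≤ n, ∀ x : E,
      ‖iteratedFDeriv ℝ i (ballCutoff E r) x‖ ≤ C * r⁻¹ ^ i := by
  let χ : ContDiffBump (0 : E) := ⟨1, 2, one_pos, one_lt_two⟩
  have hχ : ContDiff ℝ n χ := χ.contDiff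
  obtain ⟨C, hC, hχC⟩ := exists_norm_iteratedFDeriv_le_of_hasCompactSupport hχ χ.hasCompactSupport
  refine ⟨C, hC, fun r hr i hi x => ?_⟩
  have scale : iteratedFDeriv ℝ i (ballCutoff E r) x = r⁻¹ ^ i • iteratedFDeriv ℝ i χ (r⁻¹ • x) :=
    congrFun (iteratedFDeriv_comp_const_smul r⁻¹ (hχ.of_le (by exact_mod_cast hi))) x
  rw [scale, norm_smul, norm_pow, norm_inv, Real.norm_of_nonneg hr.le, mul_comm]
  gcongr
  exact hχC i hi _

end Cutoff

section SchwartzSupport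

open Distribution
open scoped SchwartzMap ContDiff Topology Manifold

variable {E F : Type*} [NormedAddCommGroup E] [NormedSpace ℝ E] [FiniteDimensional ℝ E]
  [NormedAddCommGroup F] [NormedSpace ℝ F]

lemma hasTemperateGrowth_ballCutoff {r : ℝ} (hr : 0 < r) : (ballCutoff E r).HasTemperateGrowth :=
  (hasCompactSupport_ballCutoff hr).hasTemperateGrowth (contDiff_ballCutoff r)

lemma exists_norm_iteratedFDeriv_ballCutoff_smul_sub_le (E : Type*) [NormedAddCommGroup E]
    [NormedSpace ℝ E] [FiniteDimensional ℝ E] (n : ℕ) :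
    ∃ C, 0 ≤ C ∧ ∀ r : ℝ, 1 ≤ r → ∀ {f : E → F}, ContDiff ℝ n f → ∀ (x : E) (B : ℝ),
      (∀ i ≤ n, ‖iteratedFDeriv ℝ i f x‖ ≤ B) →
      ‖iteratedFDeriv ℝ n (ballCutoff E r • f - f) x‖ ≤ C * B := by
  obtain ⟨C, hC, hχ⟩ := exists_norm_iteratedFDeriv_ballCutoff_le E n
  refine ⟨2 ^ n * C + 1, by positivity, fun r hr f hf x B hB => ?_⟩
  have prod : ‖iteratedFDeriv ℝ n (ballCutoff E r • f) x‖ ≤ 2 ^ n * (C * B) := by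
    refine (norm_iteratedFDeriv_smul_le_pow (a := C) (b := B) (ρ := 1) (contDiff_ballCutoff r) hf
      (fun i hi => (hχ r (one_pos.trans_le hr) i hi x).trans ?_)
      fun i hi => by simpa only [one_pow, mul_one] using hB i hi).trans_eq (by simp)
    gcongr
    exact inv_le_one_of_one_le₀ hr
  rw [iteratedFDeriv_sub_apply ((contDiff_ballCutoff r).smul hf).contDiffAt hf.contDiffAt]
  calc _ ≤ 2 ^ n * (C * B) + B := (norm_sub_le _ _).trans (add_le_add prod (hB n le_rfl))
    _ = _ := by ring

lemma exists_seminorm_ballCutoff_smul_sub_le (ψ : 𝓢(E, F)) (k n : ℕ) :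
    ∃ C, ∀ r : ℝ, 1 ≤ r →
      SchwartzMap.seminorm ℝ k n (SchwartzMap.smulLeftCLM F (ballCutoff E r) ψ - ψ) ≤ C * r⁻¹ := by
  obtain ⟨C, hC, hχ⟩ := exists_norm_iteratedFDeriv_ballCutoff_smul_sub_le (F := F) E n
  let S := ∑ i ∈ Finset.range (n + 1), SchwartzMap.seminorm ℝ (k + 1) i ψ
  have hS : ∀ i ≤ n, ∀ x, ‖x‖ ^ (k + 1) * ‖iteratedFDeriv ℝ i ψ x‖ ≤ S := fun i hi x =>
    (SchwartzMap.le_seminorm ℝ (k + 1) i ψ x).trans (Finset.single_le_sum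
      (f := fun i => SchwartzMap.seminorm ℝ (k + 1) i ψ) (fun _ _ => apply_nonneg _ _)
      (Finset.mem_range.2 (Nat.lt_succ_of_le hi)))
  have : 0 ≤ S := Finset.sum_nonneg fun _ _ => apply_nonneg _ _
  refine ⟨C * S, fun r hr => SchwartzMap.seminorm_le_bound ℝ k n _ (by positivity) fun x => ?_⟩
  have r_pos : 0 < r := one_pos.trans_le hr
  have coe_eq : ⇑(SchwartzMap.smulLeftCLM F (ballCutoff E r) ψ - ψ)
      = ballCutoff E r • ⇑ψ - ⇑ψ := by
    ext y
    simp [SchwartzMap.smulLeftCLM_apply_apply (hasTemperateGrowth_ballCutoff r_pos)]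
  rw [coe_eq]
  rcases lt_or_ge ‖x‖ r with hx | hx
  · have zero_near : ballCutoff E r • ⇑ψ - ⇑ψ =ᶠ[𝓝 x] 0 := by
      filter_upwards [ballCutoff_eventuallyEq_one hx] with y hy
      simp [hy]
    rw [(zero_near.iteratedFDeriv ℝ n).eq_of_nhds, iteratedFDeriv_zero]
    simp only [Pi.zero_apply, norm_zero, mul_zero]
    positivity
  · have x_pos : 0 < ‖x‖ := r_pos.trans_le hx
    have hψ : ∀ i ≤ n, ‖iteratedFDeriv ℝ i ψ x‖ ≤ S / ‖x‖ ^ (k + 1) := fun i hi =>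
      (le_div_iff₀' (by positivity)).2 (hS i hi x)
    calc _ ≤ ‖x‖ ^ k * (C * (S / ‖x‖ ^ (k + 1))) := by
          gcongr
          exact hχ r hr (ψ.smooth n) x _ hψ
      _ = C * S * ‖x‖⁻¹ := by
          rw [pow_succ]
          field_simp
      _ ≤ _ := by gcongr

lemma exists_tendsto_hasCompactSupport (ψ : 𝓢(E, F)) :
    ∃ u : ℕ → 𝓢(E, F), Filter.Tendsto u Filter.atTop (𝓝 ψ) ∧
      ∀ N, HasCompactSupport (u N) ∧ tsupport (u N) ⊆ tsupport ψ := by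
  let r : ℕ → ℝ := fun N => N + 1
  have one_le_r : ∀ N, 1 ≤ r N := fun N => by simp [r]
  have supp : ∀ N, tsupport (SchwartzMap.smulLeftCLM F (ballCutoff E (r N)) ψ)
      ⊆ tsupport ψ ∩ tsupport (ballCutoff E (r N)) :=
    fun N => SchwartzMap.tsupport_smulLeftCLM_subset _ _
  refine ⟨fun N => SchwartzMap.smulLeftCLM F (ballCutoff E (r N)) ψ, ?_, fun N => ⟨?_, ?_⟩⟩
  · rw [(schwartz_withSeminorms ℝ E F).tendsto_nhds]
    rintro ⟨k, n⟩ ε hε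
    obtain ⟨C, hC⟩ := exists_seminorm_ballCutoff_smul_sub_le ψ k n
    have lim : Filter.Tendsto (fun N => C * (r N)⁻¹) Filter.atTop (𝓝 0) := by
      simpa [r] using tendsto_one_div_add_atTop_nhds_zero_nat.const_mul C
    filter_upwards [lim.eventually_lt_const hε] with N hN
    exact (hC _ (one_le_r N)).trans_lt hN
  · exact (hasCompactSupport_ballCutoff (one_pos.trans_le (one_le_r N))).of_isClosed_subset
      (isClosed_tsupport _) ((supp N).trans Set.inter_subset_right)
  · exact (supp N).trans Set.inter_subset_left

variable {𝕜 V : Type*} [NormedField 𝕜] [NormedSpace 𝕜 F] [SMulCommClass ℝ 𝕜 F] [AddCommGroup V]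
  [Module 𝕜 V] [TopologicalSpace V]

lemma eq_zero_of_hasCompactSupport_of_disjoint_dsupport (T : 𝓢(E, F) →L[𝕜] V) {ψ : 𝓢(E, F)}
    (hc : HasCompactSupport ψ) (hψ : tsupport ψ ⊆ (dsupport T)ᶜ) : T ψ = 0 := by
  rw [dsupport_compl_eq, Set.sUnion_eq_biUnion] at hψ
  obtain ⟨t, ht, htfin, hcover⟩ := hc.isCompact.elim_finite_subcover_image
    (b := {U | IsVanishingOn T U ∧ IsOpen U}) (c := id) (fun U hU => hU.2) hψ
  have := htfin.fintype
  obtain ⟨f, hf⟩ := SmoothPartitionOfUnity.exists_isSubordinate 𝓘(ℝ, E) (isClosed_tsupport ψ)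
    (fun U : t => (U : Set E)) (fun U => (ht U.2).2)
    (by rwa [← Set.biUnion_eq_iUnion t fun U _ => U])
  have smooth : ∀ U, ContDiff ℝ ∞ fun x => f U x • ψ x := fun U =>
    (contMDiff_iff_contDiff.1 (f U).contMDiff).smul (ψ.smooth ⊤)
  have compact : ∀ U, HasCompactSupport fun x => f U x • ψ x := fun U => hc.smul_left
  have sum_eq : ψ = ∑ U, (compact U).toSchwartzMap (smooth U) := by
    ext x
    have : ψ x = (∑ U, f U x) • ψ x := by
      by_cases hx : x ∈ tsupport ψ
      · rw [← finsum_eq_sum_of_fintype, f.sum_eq_one hx, one_smul]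
      · rw [image_eq_zero_of_notMem_tsupport hx, smul_zero]
    rw [this, Finset.sum_smul, sum_apply]
    rfl
  rw [sum_eq, map_sum]
  exact Finset.sum_eq_zero fun U _ => (ht U.2).1 _ ((tsupport_smul_subset_left _ _).trans (hf U))

theorem isVanishingOn_compl_dsupport [T2Space V] (T : 𝓢(E, F) →L[𝕜] V) :
    IsVanishingOn T (dsupport T)ᶜ := fun ψ hψ => by
  obtain ⟨u, hu, hsupp⟩ := exists_tendsto_hasCompactSupport ψ
  refine tendsto_nhds_unique ((T.continuous.tendsto ψ).comp hu)
    (tendsto_const_nhds.congr fun N => ?_)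
  exact (eq_zero_of_hasCompactSupport_of_disjoint_dsupport T (hsupp N).1
    ((hsupp N).2.trans hψ)).symm

lemma map_eq_of_eventuallyEq_nhdsSet_dsupport [T2Space V] (T : 𝓢(E, F) →L[𝕜] V) {φ ψ : 𝓢(E, F)}
    (h : φ =ᶠ[𝓝ˢ (dsupport T)] ψ) : T φ = T ψ := by
  rw [← sub_eq_zero, ← map_sub]
  refine isVanishingOn_compl_dsupport T _ fun x hx hxT => ?_
  refine notMem_tsupport_iff_eventuallyEq.2 ?_ hx
  filter_upwards [h.filter_mono (nhds_le_nhdsSet hxT)] with y hy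
  exact sub_eq_zero.2 hy

end SchwartzSupport

section SchwartzDerivatives

open LineDeriv
open scoped SchwartzMap

variable {E F : Type*} [NormedAddCommGroup E] [NormedSpace ℝ E] [NormedAddCommGroup F]
  [NormedSpace ℝ F]

lemma lineDerivOp_comm (v w : E) (ψ : 𝓢(E, F)) : ∂_{v} (∂_{w} ψ) = ∂_{w} (∂_{v} ψ) := by
  ext x
  have apply_eq (v w : E) : ∂_{v} (∂_{w} ψ) x = fderiv ℝ (fderiv ℝ ψ) x v w := by
    have : DifferentiableAt ℝ (fderiv ℝ ψ) x :=
      ((ψ.smooth 2).fderiv_right (m := 1) (by norm_num)).differentiable one_ne_zero x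
    exact congr($(this.hasFDerivAt.clm_apply (hasFDerivAt_const w x) |>.fderiv) v).trans (by simp)
  rw [apply_eq, apply_eq]
  exact (ψ.smooth 2).contDiffAt.isSymmSndFDerivAt (by simp) v w

lemma norm_iteratedFDeriv_lineDerivOp_le (ψ : 𝓢(E, F)) (n : ℕ) (v x : E) :
    ‖iteratedFDeriv ℝ n (∂_{v} ψ : 𝓢(E, F)) x‖ ≤ ‖v‖ * ‖iteratedFDeriv ℝ (n + 1) ψ x‖ := by
  rw [← norm_iteratedFDeriv_fderiv]
  have smooth : ContDiff ℝ n (fderiv ℝ ψ) := (ψ.smooth (n + 1)).fderiv_right le_rfl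
  exact norm_iteratedFDeriv_clm_apply_const smooth.contDiffAt le_rfl

variable [NormedSpace ℂ F] [SMulCommClass ℝ ℂ F]

/-- The operator `-i ∂_v` on Schwartz functions, which the Fourier transform intertwines with
multiplication by a real linear form. -/
def momentum (v : E) : 𝓢(E, F) →L[ℂ] 𝓢(E, F) :=
  -Complex.I • lineDerivOpCLM ℂ 𝓢(E, F) v

lemma momentum_apply (v : E) (ψ : 𝓢(E, F)) : momentum v ψ = -Complex.I • ∂_{v} ψ := rfl

lemma momentum_comm (v w : E) :
    Commute (momentum v : 𝓢(E, F) →L[ℂ] 𝓢(E, F)) (momentum w) := by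
  refine ContinuousLinearMap.ext fun ψ => ?_
  change momentum v (momentum w ψ) = momentum w (momentum v ψ)
  simp only [momentum_apply, lineDerivOp_smul, lineDerivOp_comm v w]

lemma norm_iteratedFDeriv_momentum_le (ψ : 𝓢(E, F)) (n : ℕ) {v : E} (hv : ‖v‖ ≤ 1) (x : E) :
    ‖iteratedFDeriv ℝ n (momentum v ψ) x‖ ≤ ‖iteratedFDeriv ℝ (n + 1) ψ x‖ := by
  have : iteratedFDeriv ℝ n (momentum v ψ) x
      = -Complex.I • iteratedFDeriv ℝ n (∂_{v} ψ : 𝓢(E, F)) x :=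
    iteratedFDeriv_const_smul_apply (SchwartzMap.smooth _ n).contDiffAt
  rw [this, norm_smul, norm_neg, Complex.norm_I, one_mul]
  exact (norm_iteratedFDeriv_lineDerivOp_le ψ n v x).trans
    (mul_le_of_le_one_left (norm_nonneg _) hv)

lemma norm_iteratedFDeriv_momentum_pow_le (ψ : 𝓢(E, F)) (n k : ℕ) {v : E} (hv : ‖v‖ ≤ 1) (x : E) :
    ‖iteratedFDeriv ℝ n ((momentum v ^ k) ψ) x‖ ≤ ‖iteratedFDeriv ℝ (n + k) ψ x‖ := by
  induction k generalizing ψ with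
  | zero => simp
  | succ k ih =>
    rw [pow_succ]
    exact (ih _).trans (norm_iteratedFDeriv_momentum_le ψ (n + k) hv x)

end SchwartzDerivatives

section PlaneDerivatives

open LineDeriv
open scoped SchwartzMap

/-- The operator `(-i)^|α| D^α` on Schwartz functions of the plane. -/
def momentumPow (α : ℕ × ℕ) : 𝓢(ℝ × ℝ, ℂ) →L[ℂ] 𝓢(ℝ × ℝ, ℂ) :=
  momentum (1, 0) ^ α.1 * momentum (0, 1) ^ α.2

lemma momentumPow_momentum_fst (a b : ℕ) (ψ : 𝓢(ℝ × ℝ, ℂ)) :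
    momentumPow (a, b) (momentum (1, 0) ψ) = momentumPow (a + 1, b) ψ := by
  have : momentumPow (a, b) * momentum (1, 0) = momentumPow (a + 1, b) := by
    rw [momentumPow, momentumPow, mul_assoc, ((momentum_comm _ _).pow_left b).eq, ← mul_assoc,
      pow_succ]
  exact congr($this ψ)

lemma momentumPow_momentum_snd (a b : ℕ) (ψ : 𝓢(ℝ × ℝ, ℂ)) :
    momentumPow (a, b) (momentum (0, 1) ψ) = momentumPow (a, b + 1) ψ := by
  have : momentumPow (a, b) * momentum (0, 1) = momentumPow (a, b + 1) := by
    rw [momentumPow, momentumPow, mul_assoc, pow_succ]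
  exact congr($this ψ)

lemma norm_mderiv2 (α : ℕ × ℕ) (ψ : 𝓢(ℝ × ℝ, ℂ)) (x : ℝ × ℝ) :
    ‖mderiv2 α ψ x‖ = ‖momentumPow α ψ x‖ := by
  let D (v : ℝ × ℝ) := lineDerivOpCLM ℂ 𝓢(ℝ × ℝ, ℂ) v
  have smul_eq : momentumPow α =
      (-Complex.I) ^ (α.1 + α.2) • (D (1, 0) ^ α.1 * D (0, 1) ^ α.2) := by
    rw [momentumPow, momentum, momentum, smul_pow, smul_pow, smul_mul_smul_comm, pow_add]
  have coe_fst : ∀ n φ, ⇑((D (1, 0) ^ n) φ) = pd1^[n] φ := fun n φ => by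
    rw [FunLike.coe_pow_eq_iterate]
    exact Function.Semiconj.iterate_right (f := fun φ : 𝓢(ℝ × ℝ, ℂ) => ⇑φ) (fun _ => rfl) n φ
  have coe_snd : ∀ n φ, ⇑((D (0, 1) ^ n) φ) = pd2^[n] φ := fun n φ => by
    rw [FunLike.coe_pow_eq_iterate]
    exact Function.Semiconj.iterate_right (f := fun φ : 𝓢(ℝ × ℝ, ℂ) => ⇑φ) (fun _ => rfl) n φ
  have coe_eq : momentumPow α ψ x = (-Complex.I) ^ (α.1 + α.2) * mderiv2 α ψ x := by
    rw [smul_eq, mderiv2, ← coe_snd, ← coe_fst]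
    rfl
  simp [coe_eq]

lemma norm_momentumPow_le (α : ℕ × ℕ) (ψ : 𝓢(ℝ × ℝ, ℂ)) (x : ℝ × ℝ) :
    ‖momentumPow α ψ x‖ ≤ ‖iteratedFDeriv ℝ (α.1 + α.2) ψ x‖ := by
  rw [← norm_iteratedFDeriv_zero (𝕜 := ℝ)]
  refine (norm_iteratedFDeriv_momentum_pow_le _ 0 α.1 (by simp) x).trans ?_
  rw [zero_add]
  exact norm_iteratedFDeriv_momentum_pow_le ψ α.1 α.2 (by simp) x

lemma norm_iteratedFDeriv_succ_le_add (n : ℕ) (ψ : 𝓢(ℝ × ℝ, ℂ)) (x : ℝ × ℝ) :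
    ‖iteratedFDeriv ℝ (n + 1) ψ x‖ ≤ ‖iteratedFDeriv ℝ n (momentum (1, 0) ψ) x‖
      + ‖iteratedFDeriv ℝ n (momentum (0, 1) ψ) x‖ := by
  let coordinates (ℓ : ℝ × ℝ →L[ℝ] ℝ) : ℂ →L[ℝ] ℝ × ℝ →L[ℝ] ℂ :=
    Complex.I • ContinuousLinearMap.smulRightL ℝ (ℝ × ℝ) ℂ ℓ
  have fderiv_eq : fderiv ℝ ψ = coordinates (.fst ℝ ℝ ℝ) ∘ momentum (1, 0) ψ
      + coordinates (.snd ℝ ℝ ℝ) ∘ momentum (0, 1) ψ := by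
    ext x <;> simp [coordinates, momentum_apply, SchwartzMap.lineDerivOp_apply_eq_fderiv,
      ← mul_assoc]
  have norm_le {ℓ : ℝ × ℝ →L[ℝ] ℝ} (hℓ : ‖ℓ‖ ≤ 1) (φ : 𝓢(ℝ × ℝ, ℂ)) :
      ‖iteratedFDeriv ℝ n (coordinates ℓ ∘ φ) x‖ ≤ ‖iteratedFDeriv ℝ n φ x‖ := by
    refine (ContinuousLinearMap.norm_iteratedFDeriv_comp_left _ (φ.smooth n).contDiffAt
      le_rfl).trans (mul_le_of_le_one_left (norm_nonneg _) ?_)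
    rwa [norm_smul, Complex.norm_I, one_mul, ContinuousLinearMap.norm_smulRightL]
  have smooth (ℓ : ℝ × ℝ →L[ℝ] ℝ) (φ : 𝓢(ℝ × ℝ, ℂ)) : ContDiff ℝ n (coordinates ℓ ∘ φ) :=
    (coordinates ℓ).contDiff.comp (φ.smooth n)
  rw [← norm_iteratedFDeriv_fderiv, fderiv_eq,
    iteratedFDeriv_add_apply (smooth _ _).contDiffAt (smooth _ _).contDiffAt]
  exact (norm_add_le _ _).trans (add_le_add (norm_le (ContinuousLinearMap.norm_fst_le _ _ _) _)
    (norm_le (ContinuousLinearMap.norm_snd_le _ _ _) _))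

lemma norm_iteratedFDeriv_le_of_norm_momentumPow_le (n : ℕ) (ψ : 𝓢(ℝ × ℝ, ℂ)) (x : ℝ × ℝ) {B : ℝ}
    (hB : ∀ a b : ℕ, a + b = n → ‖momentumPow (a, b) ψ x‖ ≤ B) :
    ‖iteratedFDeriv ℝ n ψ x‖ ≤ 2 ^ n * B := by
  induction n generalizing ψ with
  | zero => simpa [momentumPow] using hB 0 0 rfl
  | succ n ih =>
    calc _ ≤ 2 ^ n * B + 2 ^ n * B :=
          (norm_iteratedFDeriv_succ_le_add n ψ x).trans (add_le_add
            (ih _ fun a b h => momentumPow_momentum_fst a b ψ ▸ hB (a + 1) b (by lia))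
            (ih _ fun a b h => momentumPow_momentum_snd a b ψ ▸ hB a (b + 1) (by lia)))
      _ = 2 ^ (n + 1) * B := by ring

end PlaneDerivatives

section JetBounds

open Distribution
open scoped SchwartzMap ContDiff Topology Manifold

variable {E F V : Type*} [NormedAddCommGroup E] [NormedSpace ℝ E] [NormedAddCommGroup F]
  [NormedSpace ℝ F]

/-- `T ψ` is bounded by `M` times the supremum over `K` of the derivatives of `ψ` of order at most
`p`. The supremum is expressed through its nonnegative upper bounds `B`. -/
def HasJetBound [Norm V] (T : 𝓢(E, F) → V) (K : Set E) (p : ℕ) (M : ℝ) : Prop :=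
  ∀ (ψ : 𝓢(E, F)) (B : ℝ), 0 ≤ B → (∀ n ≤ p, ∀ x ∈ K, ‖iteratedFDeriv ℝ n ψ x‖ ≤ B) →
    ‖T ψ‖ ≤ M * B

variable {𝕜 : Type*} [NormedField 𝕜] [NormedSpace 𝕜 F] [SMulCommClass ℝ 𝕜 F]
  [NormedAddCommGroup V] [Module 𝕜 V] [FiniteDimensional ℝ E]

lemma exists_hasJetBound_of_dsupport_subset_interior (T : 𝓢(E, F) →L[𝕜] V) {K : Set E}
    (hK : IsCompact K) (hT : dsupport T ⊆ interior K) {p : ℕ} {M : ℝ}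
    (hbound : ∀ ψ : 𝓢(E, F), tsupport ψ ⊆ K → ∀ B : ℝ, 0 ≤ B →
      (∀ n ≤ p, ∀ x ∈ K, ‖iteratedFDeriv ℝ n ψ x‖ ≤ B) → ‖T ψ‖ ≤ M * B) :
    ∃ M', HasJetBound T K p M' := by
  obtain ⟨χ, χ_one, χ_zero, -⟩ := exists_contMDiffMap_one_nhds_of_subset_interior (n := ⊤)
    𝓘(ℝ, E) (isClosed_dsupport (f := T)) hT
  have smooth : ContDiff ℝ ∞ χ := contMDiff_iff_contDiff.1 χ.contMDiff
  have supp : tsupport χ ⊆ K :=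
    closure_minimal (fun x hx => by_contra fun h => hx (χ_zero x h)) hK.isClosed
  have compact : HasCompactSupport χ := hK.of_isClosed_subset (isClosed_tsupport _) supp
  have growth := compact.hasTemperateGrowth smooth
  obtain ⟨C, hC, hχ⟩ := exists_norm_iteratedFDeriv_le_of_hasCompactSupport
    (smooth.of_le (by exact_mod_cast le_top) : ContDiff ℝ p χ) compact
  refine ⟨M * (2 ^ p * C), fun ψ B hB hψ => ?_⟩
  have localize : T ψ = T (SchwartzMap.smulLeftCLM F χ ψ) := by
    refine map_eq_of_eventuallyEq_nhdsSet_dsupport T ?_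
    filter_upwards [χ_one] with x hx
    rw [SchwartzMap.smulLeftCLM_apply_apply growth, hx, one_smul]
  rw [localize, mul_assoc, mul_assoc]
  refine hbound _ ((SchwartzMap.tsupport_smulLeftCLM_subset _ _).trans
    (Set.inter_subset_right.trans supp)) _ (by positivity) fun n hn x hx => ?_
  rw [SchwartzMap.smulLeftCLM_apply growth]
  calc _ ≤ 2 ^ n * (C * B) * 1 ^ n := norm_iteratedFDeriv_smul_le_pow
        (smooth.of_le (by exact_mod_cast le_top)) (ψ.smooth n)
        (fun i hi => by simpa only [one_pow, mul_one] using hχ i (hi.trans hn) x)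
        (fun i hi => by simpa only [one_pow, mul_one] using hψ i (hi.trans hn) x hx)
    _ ≤ 2 ^ p * (C * B) := by
      rw [one_pow, mul_one]
      gcongr
      exact one_le_two

end JetBounds

section PlaneDistributions

open Distribution

lemma distSupport2_eq_dsupport (T : TDist2) : distSupport2 T = dsupport T := by
  rw [← compl_inj_iff, dsupport_compl_eq, distSupport2, compl_compl]
  simp only [IsVanishingOn, and_comm]

lemma exists_hasJetBound_of_hasOrderAtMost2 {T : TDist2} {p : ℕ} (hT : hasOrderAtMost2 T p)
    {K : Set (ℝ × ℝ)} (hK : IsCompact K) (hTK : dsupport T ⊆ interior K) :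
    ∃ M, HasJetBound T K p M := by
  obtain ⟨M, hM⟩ := hT K hK
  refine exists_hasJetBound_of_dsupport_subset_interior T hK hTK (M := M)
    fun ψ hψ B hB hψB => hM ψ hψ B hB fun α hα x hx => ?_
  rw [norm_mderiv2]
  exact (norm_momentumPow_le α ψ x).trans (hψB _ hα x hx)

end PlaneDistributions

section Reflection

open Polynomial in
lemma exists_sum_mul_pow_eq_one (p : ℕ) : ∃ a v : ℕ → ℝ, (∀ j, v j ∈ Set.Icc (-1) 0) ∧
    ∀ m ≤ p, ∑ j ∈ Finset.range (p + 1), a j * v j ^ m = 1 := by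
  let v : ℕ → ℝ := fun j => -((j : ℝ) + 1)⁻¹
  have injOn : Set.InjOn v (Finset.range (p + 1)) := fun i _ j _ h => by simpa [v] using h
  refine ⟨fun j => (Lagrange.basis (Finset.range (p + 1)) v j).eval 1, v, fun j => ⟨?_, ?_⟩,
    fun m hm => ?_⟩
  · exact neg_le_neg (inv_le_one_of_one_le₀ (by simp))
  · exact neg_nonpos.2 (by positivity)
  · have interpolation : (X ^ m : ℝ[X]) = Lagrange.interpolate (Finset.range (p + 1)) v
        fun i => (X ^ m : ℝ[X]).eval (v i) :=
      Lagrange.eq_interpolate injOn (by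
        rw [degree_X_pow, Finset.card_range]
        exact_mod_cast Nat.lt_succ_of_le hm)
    have := congr(eval 1 $interpolation)
    simpa [Lagrange.interpolate_apply, eval_finsetSum, mul_comm] using this.symm

variable {E F : Type*} [NormedAddCommGroup E] [NormedSpace ℝ E] [NormedAddCommGroup F]
  [NormedSpace ℝ F]

lemma sum_smul_map_smul_add {ι κ : Type*} [Fintype κ]
    (Φ : ContinuousMultilinearMap ℝ (fun _ : κ => E) F) {J : Finset ι} {a v : ι → ℝ}
    (hav : ∀ m ≤ Fintype.card κ, ∑ j ∈ J, a j * v j ^ m = 1)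
    (x y : κ → E) : ∑ j ∈ J, a j • Φ (v j • x + y) = Φ (x + y) := by
  classical
  have expand (t : ℝ) : Φ (t • x + y) = ∑ A : Finset κ, t ^ A.card • Φ (A.piecewise x y) := by
    rw [Φ.map_add_univ]
    refine Finset.sum_congr rfl fun A _ => ?_
    have := Φ.map_piecewise_smul (fun _ => t) (A.piecewise x y) A
    rw [Finset.prod_const] at this
    rw [← this]
    congr 1
    ext i
    by_cases hi : i ∈ A <;> simp [hi]
  have expand_one := expand 1
  simp only [one_smul, one_pow] at expand_one
  simp only [expand, expand_one, Finset.smul_sum, smul_smul]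
  rw [Finset.sum_comm]
  refine Finset.sum_congr rfl fun A _ => ?_
  rw [← Finset.sum_smul, hav _ A.card_le_univ, one_smul]

/-- The affine map which multiplies by `v` the height `ℓ x - σ` of `x` over the hyperplane
`ℓ = σ`, moving points along `e`; it is meant for `ℓ e = 1`. -/
def scaleHeight (ℓ : E →L[ℝ] ℝ) (e : E) (σ v : ℝ) (x : E) : E :=
  x + ((v - 1) * (ℓ x - σ)) • e

/-- The linear part of `scaleHeight`. -/
def scaleHeightLinear (ℓ : E →L[ℝ] ℝ) (e : E) (v : ℝ) : E →L[ℝ] E :=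
  ContinuousLinearMap.id ℝ E + (v - 1) • ℓ.smulRight e

variable {ℓ : E →L[ℝ] ℝ} {e : E} {σ v : ℝ}

lemma scaleHeight_eq (x : E) :
    scaleHeight ℓ e σ v x = scaleHeightLinear ℓ e v x + (-((v - 1) * σ)) • e := by
  simp only [scaleHeight, scaleHeightLinear, add_apply,
    ContinuousLinearMap.id_apply, smul_apply,
    ContinuousLinearMap.smulRight_apply]
  module

lemma contDiff_scaleHeight {n : WithTop ℕ∞} : ContDiff ℝ n (scaleHeight ℓ e σ v) := by
  unfold scaleHeight
  fun_prop

lemma scaleHeight_of_eq {x : E} (hx : ℓ x = σ) : scaleHeight ℓ e σ v x = x := by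
  simp [scaleHeight, hx]

lemma map_scaleHeight (he : ℓ e = 1) (x : E) :
    ℓ (scaleHeight ℓ e σ v x) = σ + v * (ℓ x - σ) := by
  simp only [scaleHeight, map_add, map_smul, he, smul_eq_mul]
  ring

lemma norm_scaleHeightLinear_le (hv : v ∈ Set.Icc (-1) 0) :
    ‖scaleHeightLinear ℓ e v‖ ≤ 1 + 2 * (‖ℓ‖ * ‖e‖) := by
  refine (norm_add_le _ _).trans (add_le_add ContinuousLinearMap.norm_id_le ?_)
  rw [norm_smul, ContinuousLinearMap.norm_smulRight_apply]
  gcongr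
  rw [Real.norm_eq_abs, abs_le]
  constructor <;> linarith [hv.1, hv.2]

lemma iteratedFDeriv_comp_scaleHeight {n : ℕ} {f : E → F} (hf : ContDiff ℝ n f) (x : E) :
    iteratedFDeriv ℝ n (f ∘ scaleHeight ℓ e σ v) x =
      (iteratedFDeriv ℝ n f (scaleHeight ℓ e σ v x)).compContinuousLinearMap
        fun _ => scaleHeightLinear ℓ e v := by
  let b : E := (-((v - 1) * σ)) • e
  have comp_eq : f ∘ scaleHeight ℓ e σ v = (fun y => f (y + b)) ∘ scaleHeightLinear ℓ e v :=
    funext fun y => congrArg f (scaleHeight_eq y)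
  have translate : ContDiff ℝ n fun y => f (y + b) := hf.comp (contDiff_id.add contDiff_const)
  rw [comp_eq, ContinuousLinearMap.iteratedFDeriv_comp_right _ translate x le_rfl,
    iteratedFDeriv_comp_add_right, scaleHeight_eq]

lemma norm_iteratedFDeriv_comp_scaleHeight_le {n : ℕ} {f : E → F} (hf : ContDiff ℝ n f)
    (hv : v ∈ Set.Icc (-1) 0) (x : E) :
    ‖iteratedFDeriv ℝ n (f ∘ scaleHeight ℓ e σ v) x‖ ≤
      (1 + 2 * (‖ℓ‖ * ‖e‖)) ^ n * ‖iteratedFDeriv ℝ n f (scaleHeight ℓ e σ v x)‖ := by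
  rw [iteratedFDeriv_comp_scaleHeight hf, mul_comm]
  refine (ContinuousMultilinearMap.norm_compContinuousLinearMap_le _ _).trans ?_
  rw [Finset.prod_const, Finset.card_univ, Fintype.card_fin]
  gcongr
  exact norm_scaleHeightLinear_le hv

/-- The combination `∑ a j • f (scaleHeight (v j) x)` of rescaled reflections of `f` across the
hyperplane `ℓ = σ`; for suitable weights it continues the jets of `f` across the hyperplane. -/
def reflection (ℓ : E →L[ℝ] ℝ) (e : E) (σ : ℝ) (p : ℕ) (a v : ℕ → ℝ) (f : E → F) (x : E) : F :=
  ∑ j ∈ Finset.range (p + 1), a j • f (scaleHeight ℓ e σ (v j) x)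

lemma contDiff_reflection {p : ℕ} {a v : ℕ → ℝ} {n : WithTop ℕ∞} {f : E → F}
    (hf : ContDiff ℝ n f) : ContDiff ℝ n (reflection ℓ e σ p a v f) :=
  ContDiff.sum fun _ _ => (hf.comp contDiff_scaleHeight).const_smul _

lemma iteratedFDeriv_reflection {p n : ℕ} {a v : ℕ → ℝ} {f : E → F} (hf : ContDiff ℝ n f) (x : E) :
    iteratedFDeriv ℝ n (reflection ℓ e σ p a v f) x =
      ∑ j ∈ Finset.range (p + 1), a j • iteratedFDeriv ℝ n (f ∘ scaleHeight ℓ e σ (v j)) x := by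
  have smooth (j : ℕ) : ContDiff ℝ n (f ∘ scaleHeight ℓ e σ (v j)) := hf.comp contDiff_scaleHeight
  refine (iteratedFDeriv_fun_sum_apply fun j _ =>
    ((smooth j).const_smul (a j)).contDiffAt).trans ?_
  exact Finset.sum_congr rfl fun j _ => iteratedFDeriv_const_smul_apply (smooth j).contDiffAt

lemma iteratedFDeriv_reflection_of_eq {p n : ℕ} {a v : ℕ → ℝ} {f : E → F} (hf : ContDiff ℝ n f)
    (hav : ∀ m ≤ n, ∑ j ∈ Finset.range (p + 1), a j * v j ^ m = 1) {x : E} (hx : ℓ x = σ) :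
    iteratedFDeriv ℝ n (reflection ℓ e σ p a v f) x = iteratedFDeriv ℝ n f x := by
  rw [iteratedFDeriv_reflection hf]
  ext w
  let tangent : Fin n → E := fun i => w i - ℓ (w i) • e
  let normal : Fin n → E := fun i => ℓ (w i) • e
  have decompose (t : ℝ) : (fun i => scaleHeightLinear ℓ e t (w i)) = t • normal + tangent := by
    ext i
    simp only [scaleHeightLinear, normal, tangent, add_apply,
      ContinuousLinearMap.id_apply, smul_apply,
      ContinuousLinearMap.smulRight_apply, Pi.add_apply, Pi.smul_apply]
    module
  have recompose : normal + tangent = w := by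
    ext i
    exact add_sub_cancel _ _
  simp only [iteratedFDeriv_comp_scaleHeight hf, scaleHeight_of_eq hx,
    sum_apply, smul_apply,
    ContinuousMultilinearMap.compContinuousLinearMap_apply, decompose]
  rw [sum_smul_map_smul_add _ (by simpa only [Fintype.card_fin] using hav), recompose]

lemma norm_iteratedFDeriv_reflection_le {p n : ℕ} {a v : ℕ → ℝ} {f : E → F} (hf : ContDiff ℝ n f)
    (hv : ∀ j, v j ∈ Set.Icc (-1) 0) (hn : n ≤ p) {x : E} {B : ℝ} (hB : 0 ≤ B)
    (hfB : ∀ t ∈ Set.Icc (-1) 0, ‖iteratedFDeriv ℝ n f (scaleHeight ℓ e σ t x)‖ ≤ B) :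
    ‖iteratedFDeriv ℝ n (reflection ℓ e σ p a v f) x‖ ≤
      (∑ j ∈ Finset.range (p + 1), |a j|) * (1 + 2 * (‖ℓ‖ * ‖e‖)) ^ p * B := by
  rw [iteratedFDeriv_reflection hf, Finset.sum_mul, Finset.sum_mul]
  refine norm_sum_le_of_le _ fun j _ => ?_
  rw [norm_smul, Real.norm_eq_abs, mul_assoc]
  gcongr
  calc _ ≤ (1 + 2 * (‖ℓ‖ * ‖e‖)) ^ n * B :=
        (norm_iteratedFDeriv_comp_scaleHeight_le hf (hv j) x).trans (by gcongr; exact hfB _ (hv j))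
    _ ≤ _ := by
      gcongr
      exact le_add_of_nonneg_right (by positivity)

end Reflection

section Flatness

variable {E F : Type*} [NormedAddCommGroup E] [NormedSpace ℝ E] [NormedAddCommGroup F]
  [NormedSpace ℝ F]

lemma norm_iteratedFDeriv_le_of_iteratedFDeriv_eq_zero {p : ℕ} {u : E → F} {x₀ x : E} {A : ℝ}
    (hu : ContDiff ℝ (p + 1) u) (hx₀ : ∀ k ≤ p, iteratedFDeriv ℝ k u x₀ = 0)
    (hA : ∀ y ∈ segment ℝ x₀ x, ‖iteratedFDeriv ℝ (p + 1) u y‖ ≤ A) {k : ℕ} (hk : k ≤ p) :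
    ‖iteratedFDeriv ℝ k u x‖ ≤ A * ‖x - x₀‖ ^ (p + 1 - k) := by
  have hA0 : 0 ≤ A := (norm_nonneg _).trans (hA x₀ (left_mem_segment ℝ x₀ x))
  suffices ∀ k ≤ p + 1, ∀ y ∈ segment ℝ x₀ x,
      ‖iteratedFDeriv ℝ k u y‖ ≤ A * ‖x - x₀‖ ^ (p + 1 - k) from
    this k (hk.trans p.le_succ) x (right_mem_segment ℝ x₀ x)
  intro k hk
  induction hk using Nat.decreasingInduction with
  | self => simpa using hA
  | of_succ k hk ih =>
    intro y hy
    have exponent : p + 1 - k = p + 1 - (k + 1) + 1 := by omega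
    have mean_value := (convex_segment x₀ x).norm_image_sub_le_of_norm_fderiv_le (𝕜 := ℝ)
      (fun z _ => (hu.differentiable_iteratedFDeriv (by exact_mod_cast hk)).differentiableAt)
      (fun z hz => norm_fderiv_iteratedFDeriv.trans_le (ih z hz)) (left_mem_segment ℝ x₀ x) hy
    rw [hx₀ k (Nat.lt_succ_iff.1 hk), sub_zero] at mean_value
    rw [exponent, pow_succ, ← mul_assoc]
    exact mean_value.trans (by gcongr; exact norm_sub_le_of_mem_segment hy)

lemma norm_iteratedFDeriv_smul_le_of_iteratedFDeriv_eq_zero {p : ℕ} {χ : E → ℝ} {u : E → F}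
    {x₀ x : E} {A C L ε : ℝ} (hL : 1 ≤ L) (hε : 0 < ε) (hε1 : ε ≤ 1) (hx : ‖x - x₀‖ ≤ L * ε)
    (hχ : ContDiff ℝ p χ) (hC : ∀ i ≤ p, ‖iteratedFDeriv ℝ i χ x‖ ≤ C * ε⁻¹ ^ i)
    (hu : ContDiff ℝ (p + 1) u) (hx₀ : ∀ k ≤ p, iteratedFDeriv ℝ k u x₀ = 0)
    (hA : ∀ y ∈ segment ℝ x₀ x, ‖iteratedFDeriv ℝ (p + 1) u y‖ ≤ A) {n : ℕ} (hn : n ≤ p) :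
    ‖iteratedFDeriv ℝ n (fun y => χ y • u y) x‖ ≤ 2 ^ p * (C * (A * L ^ (p + 1))) * ε := by
  have hA0 : 0 ≤ A := (norm_nonneg _).trans (hA x₀ (left_mem_segment ℝ x₀ x))
  have hC0 : 0 ≤ C := by simpa using (norm_nonneg _).trans (hC 0 p.zero_le)
  have u_bound (i : ℕ) (hi : i ≤ n) :
      ‖iteratedFDeriv ℝ i u x‖ ≤ A * L ^ (p + 1) * ε ^ (p + 1) * ε⁻¹ ^ i := by
    calc _ ≤ A * (L * ε) ^ (p + 1 - i) :=
          (norm_iteratedFDeriv_le_of_iteratedFDeriv_eq_zero hu hx₀ hA (hi.trans hn)).trans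
            (by gcongr)
      _ ≤ A * (L ^ (p + 1) * ε ^ (p + 1 - i)) := by
          rw [mul_pow]
          gcongr
          exact Nat.sub_le _ _
      _ = _ := by
          rw [inv_pow, pow_sub₀ ε hε.ne' (by omega)]
          ring
  calc _ ≤ 2 ^ n * (C * (A * L ^ (p + 1) * ε ^ (p + 1))) * ε⁻¹ ^ n :=
        norm_iteratedFDeriv_smul_le_pow (hχ.of_le (by exact_mod_cast hn))
          (hu.of_le (by exact_mod_cast hn.trans p.le_succ)) (fun i hi => hC i (hi.trans hn)) u_bound
    _ = 2 ^ n * (C * (A * L ^ (p + 1))) * ε ^ (p - n) * ε := by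
        rw [inv_pow, pow_sub₀ ε hε.ne' hn, pow_succ ε]
        ring
    _ ≤ 2 ^ p * (C * (A * L ^ (p + 1))) * 1 * ε := by
        gcongr
        · exact one_le_two
        · exact pow_le_one₀ hε.le hε1
    _ = _ := by rw [mul_one]

end Flatness

section Extension

open Set
open scoped ContDiff Topology

variable {E F : Type*} [NormedAddCommGroup E] [NormedSpace ℝ E] [NormedAddCommGroup F]
  [NormedSpace ℝ F]

/-- The smooth cut-off function which is `1` on the half-space `ℓ ≤ σ` and `0` on `σ + ε ≤ ℓ`. -/
def halfSpaceCutoff (ℓ : E →L[ℝ] ℝ) (σ ε : ℝ) (x : E) : ℝ :=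
  smoothTransition (1 + ε⁻¹ * (σ - ℓ x))

variable {ℓ : E →L[ℝ] ℝ} {σ ε : ℝ}

lemma contDiff_halfSpaceCutoff {n : ℕ∞} : ContDiff ℝ n (halfSpaceCutoff ℓ σ ε) :=
  smoothTransition.contDiff.comp (by fun_prop)

lemma halfSpaceCutoff_eq_one (hε : 0 < ε) {x : E} (hx : ℓ x ≤ σ) :
    halfSpaceCutoff ℓ σ ε x = 1 :=
  smoothTransition.one_of_one_le
    (le_add_of_nonneg_right (mul_nonneg (inv_pos.2 hε).le (sub_nonneg.2 hx)))

lemma halfSpaceCutoff_eq_zero (hε : 0 < ε) {x : E} (hx : σ + ε ≤ ℓ x) :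
    halfSpaceCutoff ℓ σ ε x = 0 := by
  refine smoothTransition.zero_of_nonpos ?_
  have : ε⁻¹ * (σ - ℓ x) ≤ ε⁻¹ * -ε := by
    gcongr
    linarith
  rw [mul_neg, inv_mul_cancel₀ hε.ne'] at this
  linarith

lemma exists_norm_iteratedFDeriv_halfSpaceCutoff_le (ℓ : E →L[ℝ] ℝ) (p : ℕ) :
    ∃ C, ∀ σ ε : ℝ, 0 < ε → ∀ i ≤ p, ∀ x, ℓ x ∈ Icc σ (σ + ε) →
      ‖iteratedFDeriv ℝ i (halfSpaceCutoff ℓ σ ε) x‖ ≤ C * ε⁻¹ ^ i := by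
  have smooth : ContDiff ℝ p smoothTransition := smoothTransition.contDiff
  have bound (i : ℕ) : ∃ C, ∀ t ∈ Icc (0 : ℝ) 1, ‖iteratedFDeriv ℝ i smoothTransition t‖ ≤ C :=
    isCompact_Icc.exists_bound_of_continuousOn (smoothTransition.contDiff (n := ⊤)
      |>.continuous_iteratedFDeriv (by exact_mod_cast le_top)).continuousOn
  choose C hC using bound
  refine ⟨∑ i ∈ Finset.range (p + 1), |C i| * ‖ℓ‖ ^ i, fun σ ε hε i hi x hx => ?_⟩
  let g : E →L[ℝ] ℝ := -(ε⁻¹ • ℓ)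
  have comp_eq : halfSpaceCutoff ℓ σ ε = (fun t => smoothTransition (t + (1 + ε⁻¹ * σ))) ∘ g := by
    ext y
    simp only [halfSpaceCutoff, g, Function.comp_apply, neg_apply, smul_apply, smul_eq_mul]
    congr 1
    ring
  have argument_mem : g x + (1 + ε⁻¹ * σ) ∈ Icc (0 : ℝ) 1 := by
    have : g x + (1 + ε⁻¹ * σ) = (σ + ε - ℓ x) / ε := by
      simp only [g, neg_apply, smul_apply, smul_eq_mul]
      field_simp
      ring
    rw [this]
    exact ⟨div_nonneg (by linarith [hx.2]) hε.le, (div_le_one hε).2 (by linarith [hx.1])⟩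
  have norm_g : ‖g‖ = ε⁻¹ * ‖ℓ‖ := by
    rw [norm_neg, norm_smul, norm_inv, Real.norm_of_nonneg hε.le]
  have translate : ContDiff ℝ p fun t => smoothTransition (t + (1 + ε⁻¹ * σ)) :=
    smooth.comp (by fun_prop)
  rw [comp_eq, g.iteratedFDeriv_comp_right translate x (by exact_mod_cast hi),
    iteratedFDeriv_comp_add_right]
  refine (ContinuousMultilinearMap.norm_compContinuousLinearMap_le _ _).trans ?_
  rw [Finset.prod_const, Finset.card_univ, Fintype.card_fin, norm_g]
  calc _ ≤ |C i| * (ε⁻¹ * ‖ℓ‖) ^ i := by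
        gcongr
        exact (hC i _ argument_mem).trans (le_abs_self _)
    _ = |C i| * ‖ℓ‖ ^ i * ε⁻¹ ^ i := by ring
    _ ≤ _ := by
        gcongr
        exact Finset.single_le_sum (f := fun i => |C i| * ‖ℓ‖ ^ i) (fun _ _ => by positivity)
          (Finset.mem_range.2 (Nat.lt_succ_of_le hi))

lemma exists_norm_iteratedFDeriv_le_on_segments {m : ℕ} {u : E → F} (hu : ContDiff ℝ m u)
    {K : Set E} (hK : IsCompact K) (e : E) :
    ∃ A, ∀ x ∈ K, ∀ t ∈ Icc (0 : ℝ) 1, ∀ y ∈ segment ℝ (x - t • e) x,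
      ‖iteratedFDeriv ℝ m u y‖ ≤ A := by
  obtain ⟨A, hA⟩ := ((hK.prod isCompact_Icc).image (f := fun z : E × ℝ => z.1 - z.2 • e)
    (by fun_prop)).exists_bound_of_continuousOn
      (hu.continuous_iteratedFDeriv (by exact_mod_cast le_rfl)).continuousOn
  refine ⟨A, fun x hx t ht y hy => hA y ?_⟩
  rw [segment_eq_image'] at hy
  obtain ⟨θ, hθ, rfl⟩ := hy
  refine ⟨(x, (1 - θ) * t), ⟨hx, mul_nonneg (by linarith [hθ.2]) ht.1,
    mul_le_one₀ (by linarith [hθ.1]) ht.1 ht.2⟩, ?_⟩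
  simp only [sub_sub_cancel]
  module

lemma exists_norm_iteratedFDeriv_halfSpaceCutoff_smul_le {e : E} (he : ℓ e = 1) {u : E → F} {p : ℕ}
    (hu : ContDiff ℝ (p + 1) u) (flat : ∀ k ≤ p, ∀ x, ℓ x = σ → iteratedFDeriv ℝ k u x = 0)
    {K : Set E} (hK : IsCompact K) {η : ℝ} (hη : 0 < η) :
    ∃ ε > 0, ∀ n ≤ p, ∀ x ∈ K, ℓ x ∈ Icc σ (σ + ε) →
      ‖iteratedFDeriv ℝ n (fun y => halfSpaceCutoff ℓ σ ε y • u y) x‖ ≤ η := by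
  obtain ⟨C, hχ⟩ := exists_norm_iteratedFDeriv_halfSpaceCutoff_le ℓ p
  obtain ⟨A, hA⟩ := exists_norm_iteratedFDeriv_le_on_segments (m := p + 1)
    (by exact_mod_cast hu) hK e
  let D := 2 ^ p * (C * (A * (1 + ‖e‖) ^ (p + 1)))
  obtain ⟨ε, hε, hε1, hDε⟩ : ∃ ε > 0, ε ≤ 1 ∧ D * ε ≤ η := by
    refine ⟨min 1 (η / (|D| + 1)), by positivity, min_le_left _ _, ?_⟩
    calc D * min 1 (η / (|D| + 1)) ≤ (|D| + 1) * (η / (|D| + 1)) := by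
          gcongr
          · exact (le_abs_self D).trans (le_add_of_nonneg_right zero_le_one)
          · exact min_le_right _ _
      _ = η := mul_div_cancel₀ _ (by positivity)
  refine ⟨ε, hε, fun n hn x hx hxσ => le_trans ?_ hDε⟩
  refine norm_iteratedFDeriv_smul_le_of_iteratedFDeriv_eq_zero (x₀ := x - (ℓ x - σ) • e)
    (le_add_of_nonneg_right (norm_nonneg e)) hε hε1 ?_ contDiff_halfSpaceCutoff
    (fun i hi => hχ σ ε hε i hi x hxσ) hu (fun k hk => flat k hk _ (by simp [he]))
    (hA x hx _ ⟨by linarith [hxσ.1], by linarith [hxσ.2]⟩) hn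
  rw [sub_sub_cancel, norm_smul, Real.norm_of_nonneg (by linarith [hxσ.1]), mul_comm]
  exact mul_le_mul (le_add_of_nonneg_left zero_le_one) (by linarith [hxσ.2])
    (by linarith [hxσ.1]) (by positivity)

/- A smooth substitute for the `C^p` function equal to `f` where `ℓ ≤ σ` and to `g` elsewhere: over
a transition layer of width `ε`, the error `χ • (f - g)` has derivatives of size `O(ε)` because
`f - g` vanishes to order `p` on the hyperplane. -/
theorem exists_contDiff_gluing_halfSpace {e : E} (he : ℓ e = 1) {f g : E → F}
    (hf : ContDiff ℝ ∞ f) (hg : ContDiff ℝ ∞ g) {p : ℕ}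
    (hfg : ∀ k ≤ p, ∀ x, ℓ x = σ → iteratedFDeriv ℝ k f x = iteratedFDeriv ℝ k g x)
    {K : Set E} (hK : IsCompact K) {B : ℝ}
    (hfB : ∀ n ≤ p, ∀ x ∈ K, ℓ x ≤ σ → ‖iteratedFDeriv ℝ n f x‖ ≤ B)
    (hgB : ∀ n ≤ p, ∀ x ∈ K, σ ≤ ℓ x → ‖iteratedFDeriv ℝ n g x‖ ≤ B) {η : ℝ} (hη : 0 < η) :
    ∃ h : E → F, ContDiff ℝ ∞ h ∧ (∀ x, ℓ x ≤ σ → h x = f x) ∧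
      ∀ n ≤ p, ∀ x ∈ K, ‖iteratedFDeriv ℝ n h x‖ ≤ B + η := by
  have flat (k : ℕ) (hk : k ≤ p) (x : E) (hx : ℓ x = σ) : iteratedFDeriv ℝ k (f - g) x = 0 := by
    rw [iteratedFDeriv_sub_apply (hf.of_le (by exact_mod_cast le_top)).contDiffAt
      (hg.of_le (by exact_mod_cast le_top)).contDiffAt, hfg k hk x hx, sub_self]
  obtain ⟨ε, hε, layer⟩ := exists_norm_iteratedFDeriv_halfSpaceCutoff_smul_le he
    ((hf.sub hg).of_le (by exact_mod_cast le_top)) flat hK hη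
  let h : E → F := g + fun x => halfSpaceCutoff ℓ σ ε x • (f - g) x
  have h_eq_f {x : E} (hx : ℓ x ≤ σ) : h x = f x := by
    simp [h, halfSpaceCutoff_eq_one hε hx]
  have h_eq_g {x : E} (hx : σ + ε ≤ ℓ x) : h x = g x := by
    simp [h, halfSpaceCutoff_eq_zero hε hx]
  have smooth_cutoff_smul : ContDiff ℝ ∞ fun x => halfSpaceCutoff ℓ σ ε x • (f - g) x :=
    contDiff_halfSpaceCutoff.smul (hf.sub hg)
  refine ⟨h, hg.add smooth_cutoff_smul, fun x => h_eq_f, fun n hn x hx => ?_⟩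
  rcases lt_or_ge (ℓ x) σ with hxσ | hxσ
  · have : h =ᶠ[𝓝 x] f :=
      (ℓ.continuous.continuousAt.eventually_lt_const hxσ).mono fun y hy => h_eq_f hy.le
    rw [(this.iteratedFDeriv ℝ n).eq_of_nhds]
    exact (hfB n hn x hx hxσ.le).trans (le_add_of_nonneg_right hη.le)
  rcases lt_or_ge (σ + ε) (ℓ x) with hxε | hxε
  · have : h =ᶠ[𝓝 x] g :=
      (ℓ.continuous.continuousAt.eventually_const_lt hxε).mono fun y hy => h_eq_g hy.le
    rw [(this.iteratedFDeriv ℝ n).eq_of_nhds]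
    exact (hgB n hn x hx hxσ).trans (le_add_of_nonneg_right hη.le)
  rw [iteratedFDeriv_add_apply (hg.of_le (by exact_mod_cast le_top)).contDiffAt
    (smooth_cutoff_smul.of_le (by exact_mod_cast le_top)).contDiffAt]
  exact norm_add_le_of_le (hgB n hn x hx hxσ) (layer n hn x hx ⟨hxσ, hxε⟩)

variable (F) in
/-- Every smooth `f` agrees on `K` with a smooth function whose derivatives of order at most `p`
are bounded on `K'` by `C` times a given positive bound for those of `f` on `K`. -/
def HasSmoothExtension (p : ℕ) (K K' : Set E) (C : ℝ) : Prop :=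
  ∀ f : E → F, ContDiff ℝ ∞ f → ∀ B > 0, (∀ n ≤ p, ∀ x ∈ K, ‖iteratedFDeriv ℝ n f x‖ ≤ B) →
    ∃ h : E → F, ContDiff ℝ ∞ h ∧ EqOn h f K ∧ ∀ n ≤ p, ∀ x ∈ K', ‖iteratedFDeriv ℝ n h x‖ ≤ C * B

lemma HasSmoothExtension.trans {p : ℕ} {K₁ K₂ K₃ : Set E} {C C' : ℝ}
    (h₁ : HasSmoothExtension F p K₁ K₂ C) (h₂ : HasSmoothExtension F p K₂ K₃ C') (hC : 0 < C)
    (hK : K₁ ⊆ K₂) : HasSmoothExtension F p K₁ K₃ (C' * C) := by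
  intro f hf B hB hfB
  obtain ⟨g, hg, hgf, hgB⟩ := h₁ f hf B hB hfB
  obtain ⟨h, hh, hhg, hhB⟩ := h₂ g hg _ (mul_pos hC hB) hgB
  refine ⟨h, hh, (hhg.mono hK).trans hgf, ?_⟩
  simpa only [mul_assoc] using hhB

variable {e : E}

variable (F) in
theorem exists_hasSmoothExtension_of_halfSpace (he : ℓ e = 1) (p : ℕ) :
    ∃ C > 0, ∀ {σ : ℝ} {K K' : Set E}, IsCompact K' → (∀ x ∈ K, ℓ x ≤ σ) →
      (∀ x ∈ K', ℓ x ≤ σ → x ∈ K) →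
      (∀ x ∈ K', σ ≤ ℓ x → ∀ v ∈ Icc (-1) 0, scaleHeight ℓ e σ v x ∈ K) →
      HasSmoothExtension F p K K' C := by
  obtain ⟨a, v, hv, hav⟩ := exists_sum_mul_pow_eq_one p
  let C := (∑ j ∈ Finset.range (p + 1), |a j|) * (1 + 2 * (‖ℓ‖ * ‖e‖)) ^ p
  have C_nonneg : 0 ≤ C := by positivity
  refine ⟨1 + C + 1, by positivity, fun {σ K K'} hK' hK hle hge f hf B hB hfB => ?_⟩
  have smooth (n : ℕ) : ContDiff ℝ n f := hf.of_le (by exact_mod_cast le_top)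
  obtain ⟨h, hh, hhf, hhB⟩ := exists_contDiff_gluing_halfSpace he (p := p) hf
    (contDiff_reflection (ℓ := ℓ) (e := e) (σ := σ) (p := p) (a := a) (v := v) hf)
    (fun k hk x hx => (iteratedFDeriv_reflection_of_eq (smooth k)
      (fun m hm => hav m (hm.trans hk)) hx).symm) hK' (B := (1 + C) * B)
    (fun n hn x hx hxσ => (hfB n hn x (hle x hx hxσ)).trans
      (le_mul_of_one_le_left hB.le (le_add_of_nonneg_right C_nonneg)))
    (fun n hn x hx hxσ => (norm_iteratedFDeriv_reflection_le (smooth n) hv hn hB.le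
      fun t ht => hfB n hn _ (hge x hx hxσ t ht)).trans
        (mul_le_mul_of_nonneg_right (le_add_of_nonneg_left zero_le_one) hB.le)) hB
  refine ⟨h, hh, fun x hx => hhf x (hK x hx), fun n hn x hx => (hhB n hn x hx).trans_eq ?_⟩
  ring

variable (F) in
lemma exists_hasSmoothExtension_slab (he : ℓ e = 1) (p : ℕ) :
    ∃ C > 0, ∀ {N : Set E} {s : ℝ}, (∀ x ∈ N, ∀ t : ℝ, x + t • e ∈ N) →
      IsCompact (N ∩ ℓ ⁻¹' Icc (-(3 * s)) (3 * s)) →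
      HasSmoothExtension F p (N ∩ ℓ ⁻¹' Icc (-s) s) (N ∩ ℓ ⁻¹' Icc (-(3 * s)) (3 * s)) C := by
  have he' : (-ℓ) (-e) = 1 := by simp [he]
  obtain ⟨C₁, hC₁, extension⟩ := exists_hasSmoothExtension_of_halfSpace F he p
  obtain ⟨C₂, hC₂, extension'⟩ := exists_hasSmoothExtension_of_halfSpace F he' p
  refine ⟨C₂ * C₁, mul_pos hC₂ hC₁, fun {N s} hN hK => ?_⟩
  have compact : IsCompact (N ∩ ℓ ⁻¹' Icc (-s) (3 * s)) := by
    convert! hK.inter_right ((isClosed_Ici (a := -s)).preimage ℓ.continuous) using 1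
    ext x
    simp only [mem_inter_iff, mem_preimage, mem_Icc, mem_Ici]
    constructor
    · rintro ⟨hx, hx₁, hx₂⟩
      exact ⟨⟨hx, by linarith, hx₂⟩, hx₁⟩
    · rintro ⟨⟨hx, -, hx₂⟩, hx₁⟩
      exact ⟨hx, hx₁, hx₂⟩
  have right : HasSmoothExtension F p (N ∩ ℓ ⁻¹' Icc (-s) s) (N ∩ ℓ ⁻¹' Icc (-s) (3 * s)) C₁ := by
    refine extension compact (fun x hx => hx.2.2) (fun x hx hxs => ⟨hx.1, hx.2.1, hxs⟩)
      fun x hx hxs v hv => ⟨hN x hx.1 _, ?_⟩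
    rw [mem_preimage, map_scaleHeight he]
    constructor <;> nlinarith [hv.1, hv.2, hx.2.2]
  have left : HasSmoothExtension F p (N ∩ ℓ ⁻¹' Icc (-s) (3 * s))
      (N ∩ ℓ ⁻¹' Icc (-(3 * s)) (3 * s)) C₂ := by
    refine extension' (σ := s) hK (fun x hx => neg_le.1 hx.2.1)
      (fun x hx hxs => ⟨hx.1, neg_le.1 hxs, hx.2.2⟩) fun x hx hxs v hv => ⟨?_, ?_⟩
    · rw [scaleHeight, smul_neg, ← neg_smul]
      exact hN x hx.1 _
    have height := map_scaleHeight (σ := s) (v := v) he' x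
    simp only [neg_apply] at height hxs
    constructor <;> nlinarith [hv.1, hv.2, hx.2.1]
  exact right.trans left hC₁ fun x hx => ⟨hx.1, hx.2.1, by linarith [hx.2.1, hx.2.2]⟩

lemma closedBall_zero_eq_prod (s : ℝ) :
    Metric.closedBall (0 : ℝ × ℝ) s = Icc (-s) s ×ˢ Icc (-s) s := by
  rw [← Prod.mk_zero_zero, ← closedBall_prod_same, Real.closedBall_eq_Icc, zero_sub, zero_add]

variable (F) in
theorem exists_hasSmoothExtension_closedBall (p : ℕ) : ∃ C > 0, ∀ s : ℝ,
    HasSmoothExtension F p (Metric.closedBall (0 : ℝ × ℝ) s) (Metric.closedBall 0 (3 * s)) C := by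
  obtain ⟨C₁, hC₁, horizontal⟩ :=
    exists_hasSmoothExtension_slab F (ℓ := .fst ℝ ℝ ℝ) (e := (1, 0)) rfl p
  obtain ⟨C₂, hC₂, vertical⟩ :=
    exists_hasSmoothExtension_slab F (ℓ := .snd ℝ ℝ ℝ) (e := (0, 1)) rfl p
  refine ⟨C₂ * C₁, mul_pos hC₂ hC₁, fun s => ?_⟩
  have prod_eq (a b : ℝ) : Icc (-a) a ×ˢ Icc (-b) b =
      Prod.snd ⁻¹' Icc (-b) b ∩ ContinuousLinearMap.fst ℝ ℝ ℝ ⁻¹' Icc (-a) a :=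
    inter_comm _ _
  specialize horizontal (s := s) (fun x hx t => by simpa using hx)
    (prod_eq (3 * s) s ▸ isCompact_Icc.prod isCompact_Icc)
  specialize vertical (N := Prod.fst ⁻¹' Icc (-(3 * s)) (3 * s)) (s := s)
    (fun x hx t => by simpa using hx) (isCompact_Icc.prod isCompact_Icc)
  rw [← prod_eq, ← prod_eq] at horizontal
  rw [closedBall_zero_eq_prod, closedBall_zero_eq_prod]
  refine horizontal.trans vertical hC₁ fun x hx => ?_
  exact ⟨⟨by linarith [hx.1.1, hx.1.2], by linarith [hx.1.1, hx.1.2]⟩, hx.2⟩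

end Extension

section JetBoundsOnSupport

open Distribution Filter Set
open scoped SchwartzMap ContDiff Topology

variable {E F V 𝕜 : Type*} [NormedAddCommGroup E] [NormedSpace ℝ E] [FiniteDimensional ℝ E]
  [NormedAddCommGroup F] [NormedSpace ℝ F] [NormedField 𝕜] [NormedSpace 𝕜 F]
  [SMulCommClass ℝ 𝕜 F] [NormedAddCommGroup V] [Module 𝕜 V] {T : 𝓢(E, F) →L[𝕜] V} {K K' : Set E}
  {p : ℕ} {M : ℝ}

lemma HasJetBound.norm_le_of_eqOn (hT : HasJetBound T K' p M) (hK' : Bornology.IsBounded K')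
    (hTK' : dsupport T ⊆ K') (hTK : dsupport T ⊆ interior K) {ψ : 𝓢(E, F)} {h : E → F}
    (hh : ContDiff ℝ ∞ h) (hhψ : EqOn h ψ K) {B : ℝ} (hB : 0 ≤ B)
    (hhB : ∀ n ≤ p, ∀ x ∈ K', ‖iteratedFDeriv ℝ n h x‖ ≤ B) : ‖T ψ‖ ≤ M * B := by
  obtain ⟨r, hr, hK'r⟩ := hK'.subset_ball_lt 0 0
  have cutoff_eventuallyEq {x : E} (hx : x ∈ K') :
      (fun y => ballCutoff E r y • h y) =ᶠ[𝓝 x] h := by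
    filter_upwards [ballCutoff_eventuallyEq_one (mem_ball_zero_iff.1 (hK'r hx))] with y hy
    rw [hy, Pi.one_apply, one_smul]
  let Ψ : 𝓢(E, F) := (hasCompactSupport_ballCutoff hr).smul_right.toSchwartzMap
    ((contDiff_ballCutoff r).smul hh)
  have localize : T ψ = T Ψ := by
    refine map_eq_of_eventuallyEq_nhdsSet_dsupport T
      (eventually_nhdsSet_iff_forall.2 fun x hx => ?_)
    filter_upwards [mem_interior_iff_mem_nhds.1 (hTK hx),
      cutoff_eventuallyEq (hTK' hx)] with y hyK hy
    exact (hhψ hyK).symm.trans hy.symm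
  rw [localize]
  refine hT Ψ B hB fun n hn x hx => ?_
  have : ⇑Ψ =ᶠ[𝓝 x] h := cutoff_eventuallyEq hx
  rw [(this.iteratedFDeriv ℝ n).eq_of_nhds]
  exact hhB n hn x hx

omit [FiniteDimensional ℝ E] in
lemma exists_norm_iteratedFDeriv_le_on_cthickening {f : E → F} (hf : ContDiff ℝ p f)
    (hK : IsCompact K) {B B' : ℝ} (hB : B < B')
    (hfB : ∀ n ≤ p, ∀ x ∈ K, ‖iteratedFDeriv ℝ n f x‖ ≤ B) :
    ∃ δ > 0, ∀ n ≤ p, ∀ x ∈ Metric.cthickening δ K, ‖iteratedFDeriv ℝ n f x‖ ≤ B' := by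
  let U : Set E := ⋂ n ∈ Finset.range (p + 1), {x | ‖iteratedFDeriv ℝ n f x‖ < B'}
  have open_U : IsOpen U := isOpen_biInter_finset fun n hn => isOpen_lt
    (hf.continuous_iteratedFDeriv (by exact_mod_cast Finset.mem_range_succ_iff.1 hn)).norm
    continuous_const
  have subset_U : K ⊆ U := fun x hx => mem_iInter₂.2 fun n hn =>
    (hfB n (Finset.mem_range_succ_iff.1 hn) x hx).trans_lt hB
  obtain ⟨δ, hδ, hδU⟩ := hK.exists_cthickening_subset_open open_U subset_U
  exact ⟨δ, hδ, fun n hn x hx =>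
    (mem_iInter₂.1 (hδU hx) n (Finset.mem_range_succ_iff.2 hn)).le⟩

theorem HasJetBound.map_eq_zero_of_iteratedFDeriv_eq_zero (hT : HasJetBound T K p M)
    (hT₀ : dsupport T ⊆ {0}) {u : 𝓢(E, F)} (hu : ∀ k ≤ p, iteratedFDeriv ℝ k u 0 = 0) :
    T u = 0 := by
  obtain ⟨C, hC, hχ⟩ := exists_norm_iteratedFDeriv_ballCutoff_le E p
  let A := SchwartzMap.seminorm ℝ 0 (p + 1) u
  have : 0 ≤ A := apply_nonneg _ _
  let D := 2 ^ p * (C * (A * 2 ^ (p + 1)))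
  have bound {r : ℝ} (hr : r ∈ Ioc (0 : ℝ) 1) : ‖T u‖ ≤ M * (D * r) := by
    have localize : T u = T (SchwartzMap.smulLeftCLM F (ballCutoff E r) u) := by
      refine map_eq_of_eventuallyEq_nhdsSet_dsupport T (Eventually.filter_mono
        (nhdsSet_mono hT₀) ?_)
      rw [nhdsSet_singleton]
      filter_upwards [ballCutoff_eventuallyEq_one (norm_zero.trans_lt hr.1)] with y hy
      rw [SchwartzMap.smulLeftCLM_apply_apply (hasTemperateGrowth_ballCutoff hr.1), hy,
        Pi.one_apply, one_smul]
    have hD : 0 ≤ D * r := mul_nonneg (by positivity) hr.1.le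
    rw [localize]
    refine hT _ _ hD fun n hn x _ => ?_
    rw [SchwartzMap.smulLeftCLM_apply (hasTemperateGrowth_ballCutoff hr.1)]
    by_cases hx : ‖x‖ ≤ 2 * r
    · exact norm_iteratedFDeriv_smul_le_of_iteratedFDeriv_eq_zero (x₀ := 0) one_le_two hr.1 hr.2
        (by rwa [sub_zero]) (contDiff_ballCutoff r) (fun i hi => hχ r hr.1 i hi x) (u.smooth _) hu
        (fun y _ => SchwartzMap.norm_iteratedFDeriv_le_seminorm ℝ u (p + 1) y) hn
    · have hx' : x ∉ tsupport (ballCutoff E r) := fun h =>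
        hx (mem_closedBall_zero_iff.1 (tsupport_ballCutoff_subset hr.1 h))
      rw [image_eq_zero_of_notMem_tsupport (f := iteratedFDeriv ℝ n _) fun h =>
        hx' (tsupport_smul_subset_left _ _ (tsupport_iteratedFDeriv_subset n h)), norm_zero]
      exact hD
  have limit : Tendsto (fun r : ℝ => M * (D * r)) (𝓝[>] 0) (𝓝 0) :=
    tendsto_nhdsWithin_of_tendsto_nhds (Continuous.tendsto' (by fun_prop) 0 0 (by simp))
  refine norm_le_zero_iff.1 (ge_of_tendsto limit ?_)
  filter_upwards [Ioc_mem_nhdsGT one_pos] with r hr using bound hr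

end JetBoundsOnSupport

section PlaneJetBounds

open Distribution Filter Set
open scoped SchwartzMap ContDiff Topology

variable {T : TDist2} {K : Set (ℝ × ℝ)} {p : ℕ} {M c : ℝ}

lemma HasJetBound.exists_hasJetBound_singleton (hT : HasJetBound T K p M)
    (hT₀ : dsupport T ⊆ {0}) : ∃ M', HasJetBound T {0} p M' := by
  let I := {α : ℕ × ℕ // α.1 + α.2 ≤ p}
  have : Finite I := ((Set.finite_Iic p).prod (Set.finite_Iic p)).subset (s := Iic p ×ˢ Iic p)
    (fun α (hα : α.1 + α.2 ≤ p) =>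
      ⟨(Nat.le_add_right _ _).trans hα, (Nat.le_add_left _ _).trans hα⟩)
  have := Fintype.ofFinite I
  let jet (α : I) : 𝓢(ℝ × ℝ, ℂ) →ₗ[ℂ] ℂ :=
    { toFun ψ := momentumPow α ψ 0, map_add' _ _ := by simp, map_smul' _ _ := by simp }
  have ker_le : ⨅ α, LinearMap.ker (jet α) ≤ LinearMap.ker (T : 𝓢(ℝ × ℝ, ℂ) →ₗ[ℂ] ℂ) := by
    intro u hu
    refine hT.map_eq_zero_of_iteratedFDeriv_eq_zero hT₀ fun k hk => norm_le_zero_iff.1 ?_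
    refine (norm_iteratedFDeriv_le_of_norm_momentumPow_le k u 0 (B := 0) fun a b hab => ?_).trans_eq
      (mul_zero _)
    have : jet ⟨(a, b), hab.trans_le hk⟩ u = 0 := (Submodule.mem_iInf _).1 hu _
    exact (norm_eq_zero.2 this).le
  obtain ⟨b, hb⟩ :=
    (Submodule.mem_span_range_iff_exists_fun ℂ).1 (mem_span_of_iInf_ker_le_ker ker_le)
  refine ⟨∑ α, ‖b α‖, fun ψ B _ hψB => ?_⟩
  have T_eq : T ψ = ∑ α, b α • jet α ψ := by
    simpa using congr($hb.symm ψ)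
  rw [T_eq, Finset.sum_mul]
  refine norm_sum_le_of_le _ fun α _ => ?_
  rw [norm_smul]
  gcongr
  exact (norm_momentumPow_le α ψ 0).trans (hψB _ α.2 0 rfl)

lemma HasJetBound.exists_hasJetBound_closedBall (hc : 0 < c)
    (hT : HasJetBound T (Metric.closedBall 0 (3 * c)) p M)
    (hTc : dsupport T ⊆ Metric.closedBall 0 c) :
    ∃ M', HasJetBound T (Metric.closedBall 0 c) p M' := by
  obtain ⟨C, hC, extension⟩ := exists_hasSmoothExtension_closedBall ℂ p
  refine ⟨M * C, fun ψ B hB hψB => ?_⟩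
  have bound {ε : ℝ} (hε : 0 < ε) : ‖T ψ‖ ≤ M * (C * (B + ε)) := by
    obtain ⟨δ, hδ, hψδ⟩ := exists_norm_iteratedFDeriv_le_on_cthickening (ψ.smooth p)
      (isCompact_closedBall 0 c) (lt_add_of_pos_right B hε) hψB
    rw [cthickening_closedBall hδ.le hc.le] at hψδ
    have Bε_pos : 0 < B + ε := add_pos_of_nonneg_of_pos hB hε
    obtain ⟨h, hh, hhψ, hhB⟩ := extension (δ + c) ψ (ψ.smooth ⊤) (B + ε) Bε_pos hψδ
    refine hT.norm_le_of_eqOn Metric.isBounded_closedBall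
      (hTc.trans (Metric.closedBall_subset_closedBall (by linarith))) (fun x hx => ?_) hh hhψ
      (by positivity) fun n hn x hx =>
        hhB n hn x (Metric.closedBall_subset_closedBall (by linarith) hx)
    exact Metric.ball_subset_interior_closedBall
      (Metric.closedBall_subset_ball (lt_add_of_pos_left c hδ) (hTc hx))
  have limit : Tendsto (fun ε => M * (C * (B + ε))) (𝓝[>] 0) (𝓝 (M * C * B)) :=
    tendsto_nhdsWithin_of_tendsto_nhds (Continuous.tendsto' (by fun_prop) _ _ (by ring))
  refine ge_of_tendsto limit ?_
  filter_upwards [self_mem_nhdsWithin] with ε hε using bound hε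

theorem exists_hasJetBound_closedBall (hT : hasOrderAtMost2 T p)
    (hTc : dsupport T ⊆ Metric.closedBall 0 c) :
    ∃ M, HasJetBound T (Metric.closedBall 0 c) p M := by
  rcases lt_trichotomy c 0 with hc | rfl | hc
  · rw [Metric.closedBall_eq_empty.2 hc] at hTc ⊢
    exact exists_hasJetBound_of_hasOrderAtMost2 hT isCompact_empty (hTc.trans (empty_subset _))
  · rw [Metric.closedBall_zero] at hTc ⊢
    have interior : dsupport T ⊆ interior (Metric.closedBall 0 1) := hTc.trans <|
      singleton_subset_iff.2 <|
        Metric.ball_subset_interior_closedBall (Metric.mem_ball_self one_pos)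
    obtain ⟨M, hM⟩ := exists_hasJetBound_of_hasOrderAtMost2 hT (isCompact_closedBall _ _) interior
    exact hM.exists_hasJetBound_singleton hTc
  · have interior : dsupport T ⊆ interior (Metric.closedBall 0 (3 * c)) :=
      (hTc.trans (Metric.closedBall_subset_ball (by linarith))).trans
        Metric.ball_subset_interior_closedBall
    obtain ⟨M, hM⟩ := exists_hasJetBound_of_hasOrderAtMost2 hT (isCompact_closedBall _ _) interior
    exact hM.exists_hasJetBound_closedBall hc hTc

end PlaneJetBounds

section PlaneFourier

open LineDeriv
open scoped SchwartzMap FourierTransform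

/-- The plane with its Euclidean norm, on which Mathlib's Fourier transform is available. -/
def euclideanPlane : (ℝ × ℝ) ≃L[ℝ] WithLp 2 (ℝ × ℝ) :=
  (WithLp.prodContinuousLinearEquiv 2 ℝ ℝ ℝ).symm

lemma inner_euclideanPlane (z ξ : ℝ × ℝ) :
    inner ℝ (euclideanPlane z) (euclideanPlane ξ) = ξ.1 * z.1 + ξ.2 * z.2 := by
  simp [euclideanPlane, WithLp.prod_inner_apply]

lemma integral_comp_euclideanPlane {F : Type*} [NormedAddCommGroup F] [NormedSpace ℝ F]
    (f : WithLp 2 (ℝ × ℝ) → F) : ∫ z, f (euclideanPlane z) = ∫ v, f v :=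
  (WithLp.volume_preserving_toLp ℝ ℝ).integral_comp
    (MeasurableEquiv.toLp 2 (ℝ × ℝ)).measurableEmbedding f

/-- The inverse of `paperFT` on Schwartz functions. It is Mathlib's inverse Fourier transform with
the frequency rescaled by `(2π)⁻¹`. -/
def paperFTInv (ψ : 𝓢(ℝ × ℝ, ℂ)) : 𝓢(ℝ × ℝ, ℂ) :=
  SchwartzMap.compCLMOfContinuousLinearEquiv ℂ
    ((ContinuousLinearEquiv.smulLeft (Units.mk0 (2 * π)⁻¹ (by positivity))).trans euclideanPlane)
    (𝓕⁻ (SchwartzMap.compCLMOfContinuousLinearEquiv ℂ euclideanPlane.symm ψ))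

lemma paperFTInv_eq_fourierInv (ψ : 𝓢(ℝ × ℝ, ℂ)) (ξ : ℝ × ℝ) :
    paperFTInv ψ ξ = 𝓕⁻ (SchwartzMap.compCLMOfContinuousLinearEquiv ℂ euclideanPlane.symm ψ)
      (euclideanPlane ((2 * π)⁻¹ • ξ)) := rfl

lemma paperFTInv_apply (ψ : 𝓢(ℝ × ℝ, ℂ)) (ξ : ℝ × ℝ) :
    paperFTInv ψ ξ
      = ∫ z : ℝ × ℝ, Complex.exp (Complex.I * ((ξ.1 * z.1 + ξ.2 * z.2 : ℝ) : ℂ)) * ψ z := by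
  rw [paperFTInv_eq_fourierInv, SchwartzMap.fourierInv_coe, Real.fourierInv_eq,
    ← integral_comp_euclideanPlane]
  refine integral_congr_ae (Filter.Eventually.of_forall fun z => ?_)
  have phase : 2 * π * ((2 * π)⁻¹ * ξ.1 * z.1 + (2 * π)⁻¹ * ξ.2 * z.2)
      = ξ.1 * z.1 + ξ.2 * z.2 := by field_simp
  simp only [inner_euclideanPlane, Circle.smul_def, Real.fourierChar_apply, Prod.smul_fst,
    Prod.smul_snd, smul_eq_mul, phase, mul_comm Complex.I,
    SchwartzMap.compCLMOfContinuousLinearEquiv_apply, Function.comp_apply,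
    ContinuousLinearEquiv.symm_apply_apply]

lemma paperFT_paperFTInv (ψ : 𝓢(ℝ × ℝ, ℂ)) (ξ : ℝ × ℝ) : paperFT (paperFTInv ψ) ξ = ψ ξ := by
  let g := 𝓕⁻ (SchwartzMap.compCLMOfContinuousLinearEquiv ℂ euclideanPlane.symm ψ)
  let integrand (x : ℝ × ℝ) : ℂ :=
    𝐞 (-inner ℝ (euclideanPlane x) (euclideanPlane ξ)) • g (euclideanPlane x)
  have integrand_smul (x : ℝ × ℝ) : integrand ((2 * π)⁻¹ • x)
      = paperFTInv ψ x * Complex.exp (-Complex.I * ((ξ.1 * x.1 + ξ.2 * x.2 : ℝ) : ℂ)) := by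
    have phase : 2 * π * -(ξ.1 * ((2 * π)⁻¹ * x.1) + ξ.2 * ((2 * π)⁻¹ * x.2))
        = -(ξ.1 * x.1 + ξ.2 * x.2) := by field_simp
    simp only [integrand, inner_euclideanPlane, Circle.smul_def, Real.fourierChar_apply,
      Prod.smul_fst, Prod.smul_snd, smul_eq_mul, phase, paperFTInv_eq_fourierInv, g]
    rw [mul_comm, Complex.ofReal_neg, neg_mul, neg_mul, mul_comm Complex.I]
  have integral_integrand : ∫ x, integrand x = ψ ξ := by
    calc ∫ x, integrand x = 𝓕 g (euclideanPlane ξ) := by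
          rw [integral_comp_euclideanPlane
            fun v => 𝐞 (-inner ℝ v (euclideanPlane ξ)) • g v, SchwartzMap.fourier_coe,
            Real.fourier_eq]
      _ = ψ ξ := by simp [g]
  have jacobian : 1 / (4 * (π : ℂ) ^ 2) * (((2 * π) ^ 2 : ℝ) : ℂ) = 1 := by
    push_cast; field_simp; norm_num
  calc paperFT (paperFTInv ψ) ξ = 1 / (4 * (π : ℂ) ^ 2) * ∫ x, integrand ((2 * π)⁻¹ • x) := by
        simp only [integrand_smul]; rfl
    _ = ψ ξ := by
      rw [Measure.integral_comp_inv_smul_of_nonneg volume integrand (by positivity),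
        integral_integrand, show Module.finrank ℝ (ℝ × ℝ) = 2 by simp, Complex.real_smul,
        ← mul_assoc, jacobian, one_mul]

lemma momentum_paperFTInv {v : ℝ × ℝ} {ℓ : ℝ × ℝ →L[ℝ] ℝ}
    (hℓ : ∀ z, ℓ z = v.1 * z.1 + v.2 * z.2) (ψ : 𝓢(ℝ × ℝ, ℂ)) :
    momentum v (paperFTInv ψ) = paperFTInv (SchwartzMap.smulLeftCLM ℂ ℓ ψ) := by
  rw [momentum_apply, paperFTInv, SchwartzMap.lineDerivOp_compCLMOfContinuousLinearEquiv,
    SchwartzMap.lineDerivOp_fourierInv_eq, ← map_smul, ← FourierTransform.fourierInv_smul,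
    paperFTInv]
  congr 2
  ext y
  obtain ⟨z, rfl⟩ := euclideanPlane.surjective y
  have growth_inner (w : WithLp 2 (ℝ × ℝ)) : (inner ℝ · w).HasTemperateGrowth := by fun_prop
  rw [smul_apply, smul_apply, SchwartzMap.smulLeftCLM_apply_apply (growth_inner _)]
  simp only [SchwartzMap.compCLMOfContinuousLinearEquiv_apply, Function.comp_apply,
    ContinuousLinearEquiv.symm_apply_apply,
    SchwartzMap.smulLeftCLM_apply_apply ℓ.hasTemperateGrowth,
    ContinuousLinearEquiv.trans_apply, ContinuousLinearEquiv.smulLeft_apply_apply,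
    inner_euclideanPlane, hℓ, Units.smul_mk0, Complex.real_smul]
  have unit : -Complex.I * (2 * (π : ℂ) * Complex.I) * (2 * (π : ℂ))⁻¹ = 1 := by
    field_simp
    exact neg_eq_iff_eq_neg.2 Complex.I_sq
  simp only [Prod.smul_fst, Prod.smul_snd, smul_eq_mul, Complex.ofReal_add, Complex.ofReal_mul,
    Complex.ofReal_inv, Complex.ofReal_ofNat]
  linear_combination (v.1 * z.1 + v.2 * z.2) * ψ z * unit

lemma momentum_pow_paperFTInv {v : ℝ × ℝ} {ℓ : ℝ × ℝ →L[ℝ] ℝ}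
    (hℓ : ∀ z, ℓ z = v.1 * z.1 + v.2 * z.2) (n : ℕ) (ψ : 𝓢(ℝ × ℝ, ℂ)) :
    (momentum v ^ n) (paperFTInv ψ) = paperFTInv (SchwartzMap.smulLeftCLM ℂ (⇑ℓ ^ n) ψ) := by
  induction n with
  | zero => simp [Pi.one_def]
  | succ n ih =>
    rw [pow_succ', mul_apply_eq_comp, ih, momentum_paperFTInv hℓ,
      SchwartzMap.smulLeftCLM_smulLeftCLM_apply ℓ.hasTemperateGrowth (ℓ.hasTemperateGrowth.pow n),
      pow_succ']

lemma momentumPow_paperFTInv (α : ℕ × ℕ) (ψ : 𝓢(ℝ × ℝ, ℂ)) :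
    momentumPow α (paperFTInv ψ) = paperFTInv
      (SchwartzMap.smulLeftCLM ℂ (fun z : ℝ × ℝ => z.1 ^ α.1 * z.2 ^ α.2) ψ) := by
  rw [momentumPow, mul_apply_eq_comp,
    momentum_pow_paperFTInv (ℓ := .snd ℝ ℝ ℝ) (by simp),
    momentum_pow_paperFTInv (ℓ := .fst ℝ ℝ ℝ) (by simp),
    SchwartzMap.smulLeftCLM_smulLeftCLM_apply
      ((ContinuousLinearMap.hasTemperateGrowth _).pow _)
      ((ContinuousLinearMap.hasTemperateGrowth _).pow _)]
  rfl

end PlaneFourier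

section KernelIntegrals

variable {X Y 𝕜 : Type*} [MeasurableSpace X] [MeasurableSpace Y] [RCLike 𝕜] {μ : Measure X}
  {ν : Measure Y} [SFinite μ] [SFinite ν] {k : X → Y → 𝕜} {f : X → 𝕜} {g : Y → 𝕜} {C : ℝ}

omit [SFinite μ] [SFinite ν] in
lemma integrable_kernel_mul_mul (hk : AEStronglyMeasurable k.uncurry (μ.prod ν))
    (hkC : ∀ x y, ‖k x y‖ ≤ C) (hf : Integrable f μ) (hg : Integrable g ν) :
    Integrable (Function.uncurry fun x y => k x y * (f x * g y)) (μ.prod ν) :=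
  (hf.mul_prod hg).bdd_mul hk (Filter.Eventually.of_forall fun q => hkC q.1 q.2)

lemma integrable_integral_kernel_mul_mul (hk : AEStronglyMeasurable k.uncurry (μ.prod ν))
    (hkC : ∀ x y, ‖k x y‖ ≤ C) (hf : Integrable f μ) (hg : Integrable g ν) :
    Integrable (fun y => (∫ x, k x y * f x ∂μ) * g y) ν := by
  refine (integrable_kernel_mul_mul hk hkC hf hg).integral_prod_right.congr
    (Filter.Eventually.of_forall fun y => ?_)
  simp only [Function.uncurry_apply_pair, ← mul_assoc, integral_mul_const]

lemma integral_integral_kernel_mul_mul (hk : AEStronglyMeasurable k.uncurry (μ.prod ν))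
    (hkC : ∀ x y, ‖k x y‖ ≤ C) (hf : Integrable f μ) (hg : Integrable g ν) :
    ∫ x, (∫ y, k x y * g y ∂ν) * f x ∂μ = ∫ y, (∫ x, k x y * f x ∂μ) * g y ∂ν := by
  calc _ = ∫ x, ∫ y, k x y * (f x * g y) ∂ν ∂μ := by
        simp only [mul_comm (f _), ← mul_assoc, integral_mul_const]
    _ = ∫ y, ∫ x, k x y * (f x * g y) ∂μ ∂ν :=
      integral_integral_swap (integrable_kernel_mul_mul hk hkC hf hg)
    _ = _ := by simp only [← mul_assoc, integral_mul_const]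

end KernelIntegrals

section FourierOfMeasures

open scoped SchwartzMap

variable {ν : Measure (ℝ × ℝ)} [SFinite ν] {w : ℝ × ℝ → ℂ}

lemma norm_exp_I_mul_ofReal_le (t : ℝ) : ‖Complex.exp (Complex.I * (t : ℂ))‖ ≤ 1 := by
  rw [mul_comm, Complex.norm_exp_ofReal_mul_I]

lemma monomial_smulLeftCLM_apply (α : ℕ × ℕ) (ψ : 𝓢(ℝ × ℝ, ℂ)) (z : ℝ × ℝ) (a : ℂ) :
    a * SchwartzMap.smulLeftCLM ℂ (fun z : ℝ × ℝ => z.1 ^ α.1 * z.2 ^ α.2) ψ z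
      = (z.1 : ℂ) ^ α.1 * (z.2 : ℂ) ^ α.2 * a * ψ z := by
  have growth : (fun z : ℝ × ℝ => z.1 ^ α.1 * z.2 ^ α.2).HasTemperateGrowth :=
    ((ContinuousLinearMap.fst ℝ ℝ ℝ).hasTemperateGrowth.pow _).mul
      ((ContinuousLinearMap.snd ℝ ℝ ℝ).hasTemperateGrowth.pow _)
  rw [SchwartzMap.smulLeftCLM_apply_apply growth, Complex.real_smul]
  push_cast
  ring

lemma integrable_monomial_mul_fourier_mul (α : ℕ × ℕ) (hw : Integrable w ν) (ψ : 𝓢(ℝ × ℝ, ℂ)) :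
    Integrable fun z : ℝ × ℝ => (z.1 : ℂ) ^ α.1 * (z.2 : ℂ) ^ α.2 *
      (∫ ξ, Complex.exp (Complex.I * ((ξ.1 * z.1 + ξ.2 * z.2 : ℝ) : ℂ)) * w ξ ∂ν) * ψ z := by
  simp only [← monomial_smulLeftCLM_apply]
  exact integrable_integral_kernel_mul_mul (Continuous.aestronglyMeasurable (by fun_prop))
    (fun _ _ => norm_exp_I_mul_ofReal_le _) hw (SchwartzMap.integrable _)

lemma integral_momentumPow_paperFTInv_mul (α : ℕ × ℕ) (hw : Integrable w ν) (ψ : 𝓢(ℝ × ℝ, ℂ)) :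
    ∫ ξ, momentumPow α (paperFTInv ψ) ξ * w ξ ∂ν = ∫ z : ℝ × ℝ, (z.1 : ℂ) ^ α.1 * (z.2 : ℂ) ^ α.2 *
      (∫ ξ, Complex.exp (Complex.I * ((ξ.1 * z.1 + ξ.2 * z.2 : ℝ) : ℂ)) * w ξ ∂ν) * ψ z := by
  simp only [← monomial_smulLeftCLM_apply, momentumPow_paperFTInv, paperFTInv_apply]
  exact integral_integral_kernel_mul_mul (Continuous.aestronglyMeasurable (by fun_prop))
    (fun _ _ => norm_exp_I_mul_ofReal_le _) hw (SchwartzMap.integrable _)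

end FourierOfMeasures

section OrderBoundedRepresentation

open scoped SchwartzMap

variable {T : TDist2} {K : Set (ℝ × ℝ)} {p : ℕ} {M : ℝ}

lemma HasJetBound.norm_le_of_norm_momentumPow_le (hT : HasJetBound T K p M) {ψ : 𝓢(ℝ × ℝ, ℂ)}
    {B : ℝ} (hB : 0 ≤ B)
    (hψB : ∀ α : ℕ × ℕ, α.1 + α.2 ≤ p → ∀ x ∈ K, ‖momentumPow α ψ x‖ ≤ B) :
    ‖T ψ‖ ≤ M * 2 ^ p * B := by
  rw [mul_assoc]
  refine hT ψ _ (by positivity) fun n hn x hx => ?_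
  calc ‖iteratedFDeriv ℝ n ψ x‖ ≤ 2 ^ n * B :=
        norm_iteratedFDeriv_le_of_norm_momentumPow_le n ψ x fun a b hab =>
          hψB (a, b) (hab.trans_le hn) x hx
    _ ≤ 2 ^ p * B := by gcongr; exact one_le_two

theorem HasJetBound.exists_polar_measures (hT : HasJetBound T K p M) (hK : IsCompact K) :
    ∃ (ν : ℕ × ℕ → Measure (ℝ × ℝ)) (w : ℕ × ℕ → (ℝ × ℝ) → ℂ),
      (∀ α, IsFiniteMeasure (ν α)) ∧ (∀ α, ν α Kᶜ = 0) ∧ (∀ α, Measurable (w α)) ∧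
      (∀ α ξ, ‖w α ξ‖ = 1) ∧
      ∀ ψ, T ψ = ∑ α ∈ (Finset.range (p + 1) ×ˢ Finset.range (p + 1)).filter
          (fun α : ℕ × ℕ => α.1 + α.2 ≤ p),
        ∫ ξ in K, momentumPow α ψ ξ * w α ξ ∂ν α := by
  let D (α : ℕ × ℕ) : 𝓢(ℝ × ℝ, ℂ) →ₗ[ℂ] C(ℝ × ℝ, ℂ) :=
    { toFun ψ := (momentumPow α ψ).toContinuousMap
      map_add' _ _ := by ext; simp [SchwartzMap.toContinuousMap]
      map_smul' _ _ := by ext; simp [SchwartzMap.toContinuousMap] }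
  refine exists_polar_measures_of_norm_le hK _ D (T : 𝓢(ℝ × ℝ, ℂ) →ₗ[ℂ] ℂ) (M := M * 2 ^ p)
    fun ψ B hB hψB => hT.norm_le_of_norm_momentumPow_le hB fun α hα x hx => hψB α ?_ x hx
  simp only [Finset.mem_filter, Finset.mem_product, Finset.mem_range]
  lia

end OrderBoundedRepresentation

/-- If the Fourier transform `T'` of a tempered distribution `T` on `ℝ²`
has order at most `p` and is supported in `[-c,c]²`, then `T` is represented by integration
against an entire function of the form
`Φ(x,y) = ∑_{|α| ≤ p} x^{α₁} y^{α₂} ∫_{[-c,c]²} e^{i(ξ₁x+ξ₂y)} dμ_α(ξ)`,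
where each complex Radon measure `μ_α` is encoded via its polar decomposition `w_α · ν_α`. -/
theorem bandlimited_distribution_structure (p : ℕ) (c : ℝ) (T T' : TDist2)
    (hFT : ∀ ψ ψhat : SchwartzMap (ℝ × ℝ) ℂ,
      (∀ ξ : ℝ × ℝ, ψhat ξ = paperFT (⇑ψ) ξ) → T' ψ = T ψhat)
    (hord : hasOrderAtMost2 T' p)
    (hsupp : distSupport2 T' ⊆ Set.Icc ((-c, -c) : ℝ × ℝ) ((c, c) : ℝ × ℝ)) :
    ∃ (ν : ℕ × ℕ → Measure (ℝ × ℝ)) (w : ℕ × ℕ → (ℝ × ℝ) → ℂ),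
      (∀ α, IsFiniteMeasure (ν α)) ∧
      (∀ α, ν α (Set.Icc ((-c, -c) : ℝ × ℝ) ((c, c) : ℝ × ℝ))ᶜ = 0) ∧
      (∀ α, Measurable (w α)) ∧
      (∀ α ξ, ‖w α ξ‖ = 1) ∧
      (∀ ψ : SchwartzMap (ℝ × ℝ) ℂ,
        T ψ = ∫ z : ℝ × ℝ,
          (∑ α ∈ (Finset.range (p + 1) ×ˢ Finset.range (p + 1)).filter
              (fun α : ℕ × ℕ => α.1 + α.2 ≤ p),
            (z.1 : ℂ) ^ α.1 * (z.2 : ℂ) ^ α.2 *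
              ∫ ξ in Set.Icc ((-c, -c) : ℝ × ℝ) ((c, c) : ℝ × ℝ),
                Complex.exp (Complex.I * ((ξ.1 * z.1 + ξ.2 * z.2 : ℝ) : ℂ)) * w α ξ ∂(ν α)) *
            ψ z) := by
  have hK : Metric.closedBall (0 : ℝ × ℝ) c = Set.Icc (-c, -c) (c, c) := by
    rw [closedBall_zero_eq_prod, Set.Icc_prod_Icc]
  rw [distSupport2_eq_dsupport, ← hK] at hsupp
  obtain ⟨M, hM⟩ := exists_hasJetBound_closedBall hord hsupp
  rw [hK] at hM
  obtain ⟨ν, w, hν, hνK, hw, hw1, hT'⟩ := hM.exists_polar_measures isCompact_Icc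
  refine ⟨ν, w, hν, hνK, hw, hw1, fun ψ => ?_⟩
  have integrable_w (α : ℕ × ℕ) : Integrable (w α) ((ν α).restrict (Set.Icc (-c, -c) (c, c))) :=
    .of_bound (hw α).aestronglyMeasurable 1 (.of_forall fun ξ => (hw1 α ξ).le)
  simp only [Finset.sum_mul]
  rw [← hFT (paperFTInv ψ) ψ fun ξ => (paperFT_paperFTInv ψ ξ).symm, hT',
    integral_finsetSum _ fun α _ => integrable_monomial_mul_fourier_mul α (integrable_w α) ψ]
  exact Finset.sum_congr rfl fun α _ => integral_momentumPow_paperFTInv_mul α (integrable_w α) ψ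
end
end
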